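/- Let λ be an n-partition and π an n-permutation. Then d_λ(π;x) = Σ c_λ(π′;x), where the sum runs over all π′ ∈ S_n^λ such that Y_λ(π′) ≤ Y_λ(π) entrywise. In particular s_λ(x) = Σ_{π′ ∈ S_n^λ} c_λ(π′;x). -/

import Mathlib

/-
Common combinatorial set-up for "Tableaux for Key Polynomials, Demazure
Characters, and Atoms" (Proctor–Willis).

Conventions: a box `(j, i)` means column `j`, row `i`, both 1-indexed.
Partial (remnant) tableaux are encoded by their column-length functions
`c : ℕ → ℕ` (each column of a remnant is a top segment of the original
column), together with the ambient value function `T : ℕ → ℕ → ℕ`.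
-/

open scoped BigOperators Classical

noncomputable section

namespace KeyPoly

open MvPolynomial

/-- An `n`-partition `λ = (λ_1, …, λ_n)` with `λ_1 ≥ … ≥ λ_n ≥ 0`,
recorded as a function on `1, …, n`, vanishing beyond `n`. -/
structure NPartition (n : ℕ) where
  part : ℕ → ℕ
  antitone : ∀ ⦃i j : ℕ⦄, 1 ≤ i → i ≤ j → part j ≤ part i
  outside : ∀ i : ℕ, n < i → part i = 0

variable {n : ℕ}

/-- The column length `ζ_j` of the Young diagram of `λ`. -/
def zeta (lam : NPartition n) (j : ℕ) : ℕ :=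
  ((Finset.Icc 1 n).filter fun i => j ≤ lam.part i).card

/-- The box `(j,i)` (column `j`, row `i`) belongs to the diagram of `λ`. -/
def InShape (lam : NPartition n) (j i : ℕ) : Prop :=
  1 ≤ j ∧ 1 ≤ i ∧ i ≤ n ∧ j ≤ lam.part i

/-- The boxes of the diagram of `λ`, as a finite set of pairs (column, row). -/
def boxes (lam : NPartition n) : Finset (ℕ × ℕ) :=
  (Finset.Icc 1 (lam.part 1) ×ˢ Finset.Icc 1 n).filter fun b => b.1 ≤ lam.part b.2

/-- `T` is a semistandard tableau of shape `λ` with values in `[1,n]`: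
rows weakly increase eastward, columns strictly increase southward. -/
def IsSSYT (lam : NPartition n) (T : ℕ → ℕ → ℕ) : Prop :=
  (∀ j i, InShape lam j i → 1 ≤ T j i ∧ T j i ≤ n) ∧
  (∀ j i, InShape lam (j + 1) i → T j i ≤ T (j + 1) i) ∧
  (∀ j i, InShape lam j (i + 1) → T j i < T j (i + 1))

/-- Normalization: the filling vanishes outside the shape. -/
def ZeroOutside (lam : NPartition n) (T : ℕ → ℕ → ℕ) : Prop :=
  ∀ j i, ¬ InShape lam j i → T j i = 0

/-- `T(l, k+1)`, with the boundary convention `n+1` when `k = ζ_l`. -/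
def south (lam : NPartition n) (T : ℕ → ℕ → ℕ) (l k : ℕ) : ℕ :=
  if InShape lam l (k + 1) then T l (k + 1) else n + 1

/-- `T(l+1, k)`, with the boundary convention `n` when `l = λ_k`. -/
def east (lam : NPartition n) (T : ℕ → ℕ → ℕ) (l k : ℕ) : ℕ :=
  if InShape lam (l + 1) k then T (l + 1) k else n

/-- An `n`-permutation: a tuple `(p 1, …, p n)` of distinct entries from `[1,n]`. -/
def IsNPerm (n : ℕ) (p : ℕ → ℕ) : Prop :=
  Set.BijOn p (Set.Icc 1 n) (Set.Icc 1 n)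

/-- The `λ`-key `Y_λ(π)`: column `j` is `π_1, …, π_{ζ_j}` sorted increasingly
(from top to bottom); zero outside the shape. -/
def keyTab (lam : NPartition n) (p : ℕ → ℕ) (j i : ℕ) : ℕ :=
  if InShape lam j i then
    (((Finset.Icc 1 (zeta lam j)).image p).sort (· ≤ ·)).getD (i - 1) 0
  else 0

/-- A semistandard `T` is a key if the values of each column contain the
values of every column to its east. -/
def colSet (lam : NPartition n) (T : ℕ → ℕ → ℕ) (j : ℕ) : Finset ℕ :=
  (Finset.Icc 1 (zeta lam j)).image (T j)

def IsKey (lam : NPartition n) (T : ℕ → ℕ → ℕ) : Prop :=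
  ∀ j j' : ℕ, 1 ≤ j → j ≤ j' → j' ≤ lam.part 1 → colSet lam T j' ⊆ colSet lam T j

/-! ### The (right) scanning method -/

/-- The next column of the scanning path: the earliest column `h' > h`
(up to `maxCol`) whose column bottom in the remnant `c` is nonempty and has
value weakly larger than the bottom value of column `h`. -/
def nextCol (T : ℕ → ℕ → ℕ) (c : ℕ → ℕ) (maxCol h : ℕ) : Option ℕ :=
  (List.range' (h + 1) (maxCol - h)).find?
    (fun h' => decide (0 < c h' ∧ T h (c h) ≤ T h' (c h')))

/-- Columns of the scanning path (EWIS of column bottoms) starting at column `h`,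
with explicit fuel. -/
def pathColsAux (T : ℕ → ℕ → ℕ) (c : ℕ → ℕ) (maxCol : ℕ) : ℕ → ℕ → List ℕ
  | 0, h => [h]
  | fuel + 1, h =>
    match nextCol T c maxCol h with
    | none => [h]
    | some h' => h :: pathColsAux T c maxCol fuel h'

/-- Columns of the scanning path starting at the bottom of column `j` of the
remnant with column lengths `c`. -/
def pathCols (T : ℕ → ℕ → ℕ) (c : ℕ → ℕ) (maxCol j : ℕ) : List ℕ :=
  pathColsAux T c maxCol maxCol j

/-- Remove the scanning path starting in column `j` from the remnant `c`. -/
def removePath (T : ℕ → ℕ → ℕ) (c : ℕ → ℕ) (maxCol j : ℕ) : ℕ → ℕ :=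
  fun h => if h ∈ pathCols T c maxCol j then c h - 1 else c h

/-- Iterate path removal `r` times, always starting from column `j`. -/
def remnantIter (T : ℕ → ℕ → ℕ) (c0 : ℕ → ℕ) (maxCol j : ℕ) : ℕ → ℕ → ℕ
  | 0 => c0
  | r + 1 => removePath T (remnantIter T c0 maxCol j r) maxCol j

/-- Column lengths of the remnant tableau `T^{(j;i)}`. -/
def remnant (lam : NPartition n) (T : ℕ → ℕ → ℕ) (j i : ℕ) : ℕ → ℕ :=
  remnantIter T (zeta lam) (lam.part 1) j (zeta lam j - i)

/-- The scanning path `P(T; j, i)`, recorded by its list of columns. -/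
def scanPath (lam : NPartition n) (T : ℕ → ℕ → ℕ) (j i : ℕ) : List ℕ :=
  pathCols T (remnant lam T j i) (lam.part 1) j

/-- The scanning value `S(T; j, i)`: the last value of the EWIS from `(j,i)`. -/
def scanValue (lam : NPartition n) (T : ℕ → ℕ → ℕ) (j i : ℕ) : ℕ :=
  T ((scanPath lam T j i).getLastD j)
    (remnant lam T j i ((scanPath lam T j i).getLastD j))

/-- The box `(l,k)` lies on the scanning path `P(T; j, i)`. -/
def InScanPath (lam : NPartition n) (T : ℕ → ℕ → ℕ) (j i l k : ℕ) : Prop :=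
  l ∈ scanPath lam T j i ∧ k = remnant lam T j i l

/-- `m(U)` where `U` is the remnant with column lengths `c` restricted to the
columns `l+1, …, maxCol`:  the maximum of the column-bottom values, with the
convention `m((())) = 1` for the empty tableau. -/
def mEast (T : ℕ → ℕ → ℕ) (c : ℕ → ℕ) (maxCol l : ℕ) : ℕ :=
  max 1 (((Finset.Icc (l + 1) maxCol).filter fun h => 0 < c h).sup fun h => T h (c h))

/-! ### The condition sets A, C, and B -/

/-- The set `A_λ(T, π; l, k)`. -/
def Aset (lam : NPartition n) (T : ℕ → ℕ → ℕ) (p : ℕ → ℕ) (l k : ℕ) : Set ℕ :=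
  if keyTab lam p l k < mEast T (remnant lam T l k) (lam.part 1) l then (∅ : Set ℕ)
  else Set.Icc k (min (keyTab lam p l k) (min (south lam T l k - 1) (east lam T l k)))

/-- The set `C_λ(T, π; l, k)`. -/
def Cset (lam : NPartition n) (T : ℕ → ℕ → ℕ) (p : ℕ → ℕ) (l k : ℕ) : Set ℕ :=
  if l = lam.part 1 then {keyTab lam p l k}
  else if keyTab lam p l k < mEast T (remnant lam T l k) (lam.part 1) l then (∅ : Set ℕ)
  else if mEast T (remnant lam T l k) (lam.part 1) l = keyTab lam p l k then
    Set.Icc k (min (keyTab lam p l k) (min (south lam T l k - 1) (east lam T l k)))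
  else {keyTab lam p l k} ∩ Set.Icc k (min (south lam T l k - 1) (east lam T l k))

/-- The row index `a(l,k;j)`:  the `i` with `(l-1,k) ∈ P(T;j,i)`
(convention `a(l,k;l) = k`). -/
def aIdx (lam : NPartition n) (T : ℕ → ℕ → ℕ) (l k j : ℕ) : ℕ :=
  if j = l then k
  else ((Finset.Icc 1 (zeta lam j)).filter fun i => InScanPath lam T j i (l - 1) k).sup id

/-- The row index `b(l,k;j)`:  the `i` with `(l,k+1) ∈ P(T;j,i)` when `k < ζ_l`,
and `ζ_j + 1` when `k = ζ_l` (convention `b(l,k;l) = k+1`). -/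
def bIdx (lam : NPartition n) (T : ℕ → ℕ → ℕ) (l k j : ℕ) : ℕ :=
  if j = l then k + 1
  else if k = zeta lam l then zeta lam j + 1
  else ((Finset.Icc 1 (zeta lam j)).filter fun i => InScanPath lam T j i l (k + 1)).sup id

/-- `E(l,k;j,i)`:  the value of `T` at the box `(h,m)` of `P(T;j,i)` with `h < l`
maximal (convention `E(l,k;l,k) = k`). -/
def Epath (lam : NPartition n) (T : ℕ → ℕ → ℕ) (l k j i : ℕ) : ℕ :=
  if j = l then k
  else
    T (((scanPath lam T j i).filter fun h => decide (h < l)).foldr max 0)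
      (remnant lam T j i (((scanPath lam T j i).filter fun h => decide (h < l)).foldr max 0))

/-- The set `B_λ(T, π; l, k) = ⋂_{j=1}^{l} ⋃_{i=a(j)}^{b(j)-1} [E(l,k;j,i), Y_λ(π)(j,i)]`. -/
def Bset (lam : NPartition n) (T : ℕ → ℕ → ℕ) (p : ℕ → ℕ) (l k : ℕ) : Set ℕ :=
  {v | ∀ j, 1 ≤ j → j ≤ l →
    ∃ i, aIdx lam T l k j ≤ i ∧ i + 1 ≤ bIdx lam T l k j ∧
      Epath lam T l k j i ≤ v ∧ v ≤ keyTab lam p j i}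

/-! ### The left scanning method -/

/-- The largest row `r ≤ c j` of column `j` whose value is at most `x`. -/
def maxRow (T : ℕ → ℕ → ℕ) (c : ℕ → ℕ) (j x : ℕ) : ℕ :=
  ((Finset.Icc 1 (c j)).filter fun r => T j r ≤ x).sup id

/-- The rows of the maximizing weakly decreasing sequence through columns
`j, j-1, …, 1` with initial bound `x`, in a remnant with column lengths `c`. -/
def leftRows (T : ℕ → ℕ → ℕ) (c : ℕ → ℕ) : ℕ → ℕ → List ℕ
  | 0, _ => []
  | j + 1, x => maxRow T c (j + 1) x :: leftRows T c j (T (j + 1) (maxRow T c (j + 1) x))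

/-- The column-1 value at the end of the left scanning path originating at `(j, r)`. -/
def leftEndVal (T : ℕ → ℕ → ℕ) (c : ℕ → ℕ) (j r : ℕ) : ℕ :=
  T 1 ((leftRows T c j (T j r)).getLastD 0)

/-- Remove the left scanning path originating at `(l, c l)`, together with
all values beneath it, from the remnant `c`. -/
def leftRemovePath (T : ℕ → ℕ → ℕ) (c : ℕ → ℕ) (l : ℕ) : ℕ → ℕ :=
  fun j =>
    if 1 ≤ j ∧ j ≤ l then (leftRows T c l (T l (c l))).getD (l - j) 0 - 1 else c j

/-- Iterate left-path removal `r` times (always for column `l`). -/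
def leftRemnantIter (T : ℕ → ℕ → ℕ) (c0 : ℕ → ℕ) (l : ℕ) : ℕ → ℕ → ℕ
  | 0 => c0
  | r + 1 => leftRemovePath T (leftRemnantIter T c0 l r) l

/-- Column lengths of the left remnant used to compute `M(T; l, i)`:
`T` restricted to its first `l` columns with the left scanning paths
originating at `(l, ζ_l), …, (l, i+1)` (and everything beneath them) removed. -/
def leftRemnant (lam : NPartition n) (T : ℕ → ℕ → ℕ) (l i : ℕ) : ℕ → ℕ :=
  leftRemnantIter T (zeta lam) l (zeta lam l - i)

/-- The left scanning value `M(T; l, i)`. -/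
def leftScanValue (lam : NPartition n) (T : ℕ → ℕ → ℕ) (l i : ℕ) : ℕ :=
  leftEndVal T (leftRemnant lam T l i) l i

/-! ### The condition sets F and G -/

/-- The set `F_λ(T, σ; l, k)`. -/
def Fset (lam : NPartition n) (T : ℕ → ℕ → ℕ) (sg : ℕ → ℕ) (l k : ℕ) : Set ℕ :=
  if l = 1 then Set.Icc (keyTab lam sg 1 k) (south lam T 1 k - 1)
  else
    let U := leftRemnant lam T l k
    let q := maxRow T U (l - 1) (south lam T l k - 1)
    let P := (Finset.Icc 1 q).filter fun h => keyTab lam sg l k ≤ leftEndVal T U (l - 1) h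
    if hP : P.Nonempty then Set.Icc (T (l - 1) (P.min' hP)) (south lam T l k - 1)
    else (∅ : Set ℕ)

/-- The set `G_λ(T, σ; l, k)`. -/
def Gset (lam : NPartition n) (T : ℕ → ℕ → ℕ) (sg : ℕ → ℕ) (l k : ℕ) : Set ℕ :=
  if l = 1 then {keyTab lam sg 1 k}
  else
    let U := leftRemnant lam T l k
    let q := maxRow T U (l - 1) (south lam T l k - 1)
    let P := (Finset.Icc 1 q).filter fun h => leftEndVal T U (l - 1) h = keyTab lam sg l k
    if hP : P.Nonempty then
      Set.Icc (T (l - 1) (P.min' hP))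
        (min ((if P.max' hP + 1 ≤ U (l - 1) then T (l - 1) (P.max' hP + 1) else n + 1) - 1)
          (south lam T l k - 1))
    else (∅ : Set ℕ)

/-! ### Polynomials, divided differences, words -/

/-- Polynomials in the variables `X 1, …, X n` (indexed by `ℕ`) over `ℚ`. -/
abbrev Poly : Type := MvPolynomial ℕ ℚ

/-- The action of `s_i` on polynomials: interchange `x_i` and `x_{i+1}`. -/
def sOp (i : ℕ) (P : Poly) : Poly := rename (Equiv.swap i (i + 1)) P

/-- The divided difference operator
`ρ_i = (x_i - x_{i+1})⁻¹ ∘ (1 - s_i) ∘ x_i`, defined as the unique polynomial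
`Q` with `(x_i - x_{i+1}) Q = x_i P - s_i (x_i P)`. -/
def rhoOp (i : ℕ) (P : Poly) : Poly :=
  if h : ∃ Q : Poly, (X i - X (i + 1)) * Q = X i * P - sOp i (X i * P) then h.choose
  else 0

/-- The operator `ρ̄_i := ρ_i - 1`. -/
def rhoBarOp (i : ℕ) (P : Poly) : Poly := rhoOp i P - P

/-- Apply operators indexed by a word `[i_t, …, i_1]`, rightmost first:
`applyOps f [i_t, …, i_1] P = f i_t (⋯ (f i_1 P))`. -/
def applyOps (f : ℕ → Poly → Poly) : List ℕ → Poly → Poly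
  | [], P => P
  | i :: w, P => f i (applyOps f w P)

/-- The monomial `x_1^{λ_1} ⋯ x_n^{λ_n}`. -/
def lamMonomial (lam : NPartition n) : Poly :=
  ∏ i ∈ Finset.Icc 1 n, X i ^ lam.part i

/-- The weight monomial `x^T = ∏ x_i^{c_i}` of the filling `T`. -/
def weight (lam : NPartition n) (T : ℕ → ℕ → ℕ) : Poly :=
  ∏ b ∈ boxes lam, X (T b.1 b.2)

/-- The simple reflection `s_i` acting by value. -/
def swapVal (i v : ℕ) : ℕ := if v = i then i + 1 else if v = i + 1 then i else v

/-- The permutation `s_{i_t} ⋯ s_{i_1}.(1, 2, …, n)` obtained by applying the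
word `w = [i_t, …, i_1]` (rightmost letter first, each acting by value) to the
identity. -/
def permOfWord (w : List ℕ) : ℕ → ℕ := w.foldr (fun i f => swapVal i ∘ f) id

/-- `w` is a word in letters `s_1, …, s_{n-1}` producing `π` from `(1, …, n)`. -/
def WordFor (n : ℕ) (w : List ℕ) (p : ℕ → ℕ) : Prop :=
  (∀ i ∈ w, 1 ≤ i ∧ i + 1 ≤ n) ∧ ∀ t, 1 ≤ t → t ≤ n → permOfWord w t = p t

/-- `w` is a reduced word for `π`: it produces `π` with minimal length. -/
def IsReducedWord (n : ℕ) (w : List ℕ) (p : ℕ → ℕ) : Prop :=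
  WordFor n w p ∧ ∀ w' : List ℕ, WordFor n w' p → w.length ≤ w'.length

/-- The atom `c_λ(π;x) = ρ̄_{i_t} ⋯ ρ̄_{i_1} . x_1^{λ_1} ⋯ x_n^{λ_n}`, computed
from a choice of reduced word for `π` (it is independent of this choice). -/
def atomPoly (lam : NPartition n) (p : ℕ → ℕ) : Poly :=
  if h : ∃ w : List ℕ, IsReducedWord n w p then
    applyOps rhoBarOp h.choose (lamMonomial lam)
  else 0

/-! ### `S_n^λ` -/

/-- The set `Q_λ` of distinct column lengths of `λ`. -/
def Qset (lam : NPartition n) : Finset ℕ := (Finset.Icc 1 (lam.part 1)).image (zeta lam)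

/-- `π ∈ S_n^λ`: an `n`-permutation increasing on each block `[q_{r-1}+1, q_r]`
cut out by the column lengths of `λ` (equivalently, `π_i < π_j` whenever
`i < j` and no element of `Q_λ` lies in `[i, j)`). -/
def InSnLam (lam : NPartition n) (p : ℕ → ℕ) : Prop :=
  IsNPerm n p ∧ ∀ i j, 1 ≤ i → i < j → j ≤ n →
    (∀ q ∈ Qset lam, q < i ∨ j ≤ q) → p i < p j

end KeyPoly

/-!
Two facts drive the argument. First, `ρ_i` kills the atom of a permutation `u` when `s_i u` is
shorter than `u`, since `ρ_i ρ̄_i = 0`, and otherwise turns it into the sum of the atoms of `u` and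
`s_i u`. Comparing keys through the number of entries below each value shows how the key order
behaves under `s_i`, so induction along a reduced word of `π` yields the sum of the atoms of all
`n`-permutations with a smaller key. An atom outside `S_n^λ` vanishes: a reduced word can be chosen
to end in a letter `a` with `λ_a = λ_{a + 1}`, and `ρ̄_a` kills a monomial symmetric in `x_a` and
`x_{a + 1}`.

Second, the sum of all atoms is fixed by every `ρ_i`, hence symmetric, and antisymmetrization kills
`x^δ ρ̄_i P` for every `P`. Antisymmetrizing `x^δ` times this sum therefore leaves only the atom
`x^λ`, so the product of the sum with the Vandermonde alternant `a_δ` is `a_{λ + δ}`. It is a Schur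
polynomial because `a_{λ + δ}` and `a_δ s_λ` obey the same branching rule in the last variable.
-/

namespace KeyPoly

open MvPolynomial

/-! ### Divided differences -/

theorem sOp_add (i : ℕ) (P Q : Poly) : sOp i (P + Q) = sOp i P + sOp i Q :=
  map_add _ P Q

theorem sOp_sub (i : ℕ) (P Q : Poly) : sOp i (P - Q) = sOp i P - sOp i Q :=
  map_sub _ P Q

theorem sOp_mul (i : ℕ) (P Q : Poly) : sOp i (P * Q) = sOp i P * sOp i Q :=
  map_mul _ P Q

theorem sOp_sOp (i : ℕ) (P : Poly) : sOp i (sOp i P) = P := by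
  simp [sOp, rename_rename, ← Equiv.Perm.coe_mul]

theorem sOp_X (i k : ℕ) : sOp i (X k) = X (Equiv.swap i (i + 1) k) :=
  rename_X _ k

theorem sOp_X_left (i : ℕ) : sOp i (X i) = X (i + 1) := by
  rw [sOp_X, Equiv.swap_apply_left]

theorem sOp_X_right (i : ℕ) : sOp i (X (i + 1)) = X i := by
  rw [sOp_X, Equiv.swap_apply_right]

theorem sOp_X_of_ne {i k : ℕ} (h : k ≠ i) (h' : k ≠ i + 1) : sOp i (X k) = X k := by
  rw [sOp_X, Equiv.swap_apply_of_ne_of_ne h h']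

theorem sOp_comm {i j : ℕ} (h : i + 1 < j) (P : Poly) :
    sOp i (sOp j P) = sOp j (sOp i P) := by
  simp only [sOp, rename_rename]
  congr 2
  ext k
  simp only [Function.comp, Equiv.swap_apply_def]
  grind

theorem sOp_braid (i : ℕ) (P : Poly) :
    sOp i (sOp (i + 1) (sOp i P)) = sOp (i + 1) (sOp i (sOp (i + 1) P)) := by
  simp only [sOp, rename_rename]
  congr 2
  ext k
  simp only [Function.comp, Equiv.swap_apply_def]
  grind

theorem X_sub_X_ne_zero {i j : ℕ} (h : i ≠ j) : (X i - X j : Poly) ≠ 0 :=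
  sub_ne_zero.2 fun e => h (X_injective e)

theorem X_sub_X_dvd_sub_sOp (i : ℕ) (P : Poly) : (X i - X (i + 1) : Poly) ∣ P - sOp i P := by
  induction P using MvPolynomial.induction_on with
  | C a => simp [sOp]
  | add p q hp hq =>
    rw [sOp_add, add_sub_add_comm]
    exact dvd_add hp hq
  | mul_X p k hp =>
    have hk : (X i - X (i + 1) : Poly) ∣ X k - sOp i (X k) := by
      rcases eq_or_ne k i with rfl | hi
      · rw [sOp_X_left]
      rcases eq_or_ne k (i + 1) with rfl | hi'
      · rw [sOp_X_right, dvd_sub_comm]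
      · rw [sOp_X_of_ne hi hi', sub_self]
        exact dvd_zero _
    rw [sOp_mul, show p * X k - sOp i p * sOp i (X k) =
      (p - sOp i p) * X k + sOp i p * (X k - sOp i (X k)) by ring]
    exact dvd_add (hp.mul_right _) (hk.mul_left _)

theorem X_sub_X_mul_rhoOp (i : ℕ) (P : Poly) :
    (X i - X (i + 1)) * rhoOp i P = X i * P - X (i + 1) * sOp i P := by
  have h : ∃ Q : Poly, (X i - X (i + 1)) * Q = X i * P - sOp i (X i * P) :=
    (X_sub_X_dvd_sub_sOp i (X i * P)).imp fun _ => Eq.symm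
  rw [rhoOp, dif_pos h, h.choose_spec, sOp_mul, sOp_X_left]

theorem rhoOp_eq_of_X_sub_X_mul_eq {i : ℕ} {P Q : Poly}
    (h : (X i - X (i + 1)) * Q = X i * P - X (i + 1) * sOp i P) : rhoOp i P = Q :=
  mul_left_cancel₀ (X_sub_X_ne_zero i.lt_succ_self.ne) ((X_sub_X_mul_rhoOp i P).trans h.symm)

theorem rhoOp_add (i : ℕ) (P Q : Poly) : rhoOp i (P + Q) = rhoOp i P + rhoOp i Q := by
  apply rhoOp_eq_of_X_sub_X_mul_eq
  rw [mul_add, X_sub_X_mul_rhoOp, X_sub_X_mul_rhoOp, sOp_add]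
  ring

theorem rhoOp_sub (i : ℕ) (P Q : Poly) : rhoOp i (P - Q) = rhoOp i P - rhoOp i Q := by
  apply rhoOp_eq_of_X_sub_X_mul_eq
  rw [mul_sub, X_sub_X_mul_rhoOp, X_sub_X_mul_rhoOp, sOp_sub]
  ring

theorem rhoOp_zero (i : ℕ) : rhoOp i 0 = 0 :=
  rhoOp_eq_of_X_sub_X_mul_eq (by simp [sOp])

theorem rhoOp_sum {ι : Type*} (i : ℕ) (s : Finset ι) (f : ι → Poly) :
    rhoOp i (∑ a ∈ s, f a) = ∑ a ∈ s, rhoOp i (f a) :=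
  map_sum (AddMonoidHom.mk' (rhoOp i) (rhoOp_add i)) f s

theorem sOp_rhoOp (i : ℕ) (P : Poly) : sOp i (rhoOp i P) = rhoOp i P := by
  have h := X_sub_X_mul_rhoOp i P
  have h' := congrArg (sOp i) h
  rw [sOp_mul, sOp_sub, sOp_sub, sOp_mul, sOp_mul, sOp_X_left, sOp_X_right, sOp_sOp] at h'
  apply mul_left_cancel₀ (X_sub_X_ne_zero i.lt_succ_self.ne)
  linear_combination -h - h'

theorem rhoOp_eq_self {i : ℕ} {P : Poly} (h : sOp i P = P) : rhoOp i P = P :=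
  rhoOp_eq_of_X_sub_X_mul_eq (by rw [h, sub_mul])

theorem rhoOp_rhoOp (i : ℕ) (P : Poly) : rhoOp i (rhoOp i P) = rhoOp i P :=
  rhoOp_eq_self (sOp_rhoOp i P)

theorem rhoOp_rhoBarOp (i : ℕ) (P : Poly) : rhoOp i (rhoBarOp i P) = 0 := by
  rw [rhoBarOp, rhoOp_sub, rhoOp_rhoOp, sub_self]

theorem rhoBarOp_eq_zero {i : ℕ} {P : Poly} (h : sOp i P = P) : rhoBarOp i P = 0 := by
  rw [rhoBarOp, rhoOp_eq_self h, sub_self]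

theorem rhoBarOp_zero (i : ℕ) : rhoBarOp i 0 = 0 := by
  rw [rhoBarOp, rhoOp_zero, sub_self]

theorem sOp_X_mul_rhoBarOp (i : ℕ) (P : Poly) :
    sOp i (X i * rhoBarOp i P) = X i * rhoBarOp i P := by
  have h := X_sub_X_mul_rhoOp i P
  rw [sOp_mul, sOp_X_left, rhoBarOp, sOp_sub, sOp_rhoOp]
  linear_combination -h

theorem rhoOp_comm {i j : ℕ} (h : i + 1 < j) (P : Poly) :
    rhoOp i (rhoOp j P) = rhoOp j (rhoOp i P) := by
  have hi := X_sub_X_mul_rhoOp i P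
  have hj := X_sub_X_mul_rhoOp j P
  have hij := X_sub_X_mul_rhoOp i (rhoOp j P)
  have hji := X_sub_X_mul_rhoOp j (rhoOp i P)
  have si := congrArg (sOp j) hi
  have sj := congrArg (sOp i) hj
  simp only [sOp_mul, sOp_sub, sOp_X_of_ne (show i ≠ j by omega) (show i ≠ j + 1 by omega),
    sOp_X_of_ne (show i + 1 ≠ j by omega) (show i + 1 ≠ j + 1 by omega)] at si
  simp only [sOp_mul, sOp_sub, sOp_X_of_ne (show j ≠ i by omega) (show j ≠ i + 1 by omega),
    sOp_X_of_ne (show j + 1 ≠ i by omega) (show j + 1 ≠ i + 1 by omega), sOp_comm h] at sj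
  apply mul_left_cancel₀ (X_sub_X_ne_zero i.lt_succ_self.ne)
  apply mul_left_cancel₀ (X_sub_X_ne_zero j.lt_succ_self.ne)
  linear_combination (X j - X (j + 1)) * hij - (X i - X (i + 1)) * hji + X i * hj
    - X (i + 1) * sj - X j * hi + X (j + 1) * si

/-- The alternating sum of the images of `x_i² x_{i+1} P` under the symmetric group generated by
`s_i` and `s_{i+1}`. Both sides of the braid relation for the `ρ_i` are the quotient of this
polynomial by the Vandermonde product in `x_i, x_{i+1}, x_{i+2}`. -/
def braidNumerator (i : ℕ) (P : Poly) : Poly :=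
  X i ^ 2 * X (i + 1) * P - X i * X (i + 1) ^ 2 * sOp i P - X i ^ 2 * X (i + 2) * sOp (i + 1) P
    + X i * X (i + 2) ^ 2 * sOp (i + 1) (sOp i P)
    + X (i + 1) ^ 2 * X (i + 2) * sOp i (sOp (i + 1) P)
    - X (i + 1) * X (i + 2) ^ 2 * sOp (i + 1) (sOp i (sOp (i + 1) P))

theorem sOp_X_add_two (i : ℕ) : sOp i (X (i + 1 + 1)) = X (i + 1 + 1) :=
  sOp_X_of_ne (by omega) (by omega)

theorem sOp_succ_X (i : ℕ) : sOp (i + 1) (X i) = X i :=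
  sOp_X_of_ne (by omega) (by omega)

theorem vandermonde_mul_rhoOp_rhoOp_succ_rhoOp (i : ℕ) (P : Poly) :
    (X i - X (i + 2)) * ((X (i + 1) - X (i + 2)) * ((X i - X (i + 1)) *
      rhoOp i (rhoOp (i + 1) (rhoOp i P)))) = braidNumerator i P := by
  have h₁ := X_sub_X_mul_rhoOp i P
  have h₂ := X_sub_X_mul_rhoOp (i + 1) (rhoOp i P)
  have h₃ := X_sub_X_mul_rhoOp i (rhoOp (i + 1) (rhoOp i P))
  have s₁ := congrArg (sOp (i + 1)) h₁
  have s₂ := congrArg (sOp i) h₂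
  have t₁ := congrArg (sOp i) s₁
  simp only [sOp_mul, sOp_sub, sOp_X_left, sOp_X_right, sOp_X_add_two, sOp_succ_X, sOp_rhoOp,
    sOp_braid] at s₁ s₂ t₁
  unfold braidNumerator
  linear_combination (X i - X (i + 2)) * (X (i + 1) - X (i + 2)) * h₃
    + X i * (X i - X (i + 2)) * h₂ - X (i + 1) * (X (i + 1) - X (i + 2)) * s₂
    + X i * X (i + 1) * h₁ - X i * X (i + 2) * s₁ + X (i + 1) * X (i + 2) * t₁

theorem vandermonde_mul_rhoOp_succ_rhoOp_rhoOp_succ (i : ℕ) (P : Poly) :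
    (X i - X (i + 2)) * ((X (i + 1) - X (i + 2)) * ((X i - X (i + 1)) *
      rhoOp (i + 1) (rhoOp i (rhoOp (i + 1) P)))) = braidNumerator i P := by
  have h₁ := X_sub_X_mul_rhoOp (i + 1) P
  have h₂ := X_sub_X_mul_rhoOp i (rhoOp (i + 1) P)
  have h₃ := X_sub_X_mul_rhoOp (i + 1) (rhoOp i (rhoOp (i + 1) P))
  have s₁ := congrArg (sOp i) h₁
  have s₂ := congrArg (sOp (i + 1)) h₂
  have t₁ := congrArg (sOp (i + 1)) s₁
  simp only [sOp_mul, sOp_sub, sOp_X_left, sOp_X_right, sOp_X_add_two, sOp_succ_X,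
    sOp_rhoOp] at s₁ s₂ t₁
  unfold braidNumerator
  linear_combination (X i - X (i + 2)) * (X i - X (i + 1)) * h₃
    + X (i + 1) * (X i - X (i + 2)) * h₂ - X (i + 2) * (X i - X (i + 1)) * s₂
    + X i ^ 2 * h₁ - X (i + 1) ^ 2 * s₁ + X (i + 2) ^ 2 * t₁

theorem rhoOp_braid (i : ℕ) (P : Poly) :
    rhoOp i (rhoOp (i + 1) (rhoOp i P)) = rhoOp (i + 1) (rhoOp i (rhoOp (i + 1) P)) := by
  apply mul_left_cancel₀ (X_sub_X_ne_zero (show i ≠ i + 1 by omega))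
  apply mul_left_cancel₀ (X_sub_X_ne_zero (show i + 1 ≠ i + 2 by omega))
  apply mul_left_cancel₀ (X_sub_X_ne_zero (show i ≠ i + 2 by omega))
  rw [vandermonde_mul_rhoOp_rhoOp_succ_rhoOp, vandermonde_mul_rhoOp_succ_rhoOp_rhoOp_succ]

theorem rhoBarOp_comm {i j : ℕ} (h : i + 1 < j) (P : Poly) :
    rhoBarOp i (rhoBarOp j P) = rhoBarOp j (rhoBarOp i P) := by
  simp only [rhoBarOp, rhoOp_sub, rhoOp_comm h]
  ring

theorem rhoBarOp_braid (i : ℕ) (P : Poly) :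
    rhoBarOp i (rhoBarOp (i + 1) (rhoBarOp i P)) =
      rhoBarOp (i + 1) (rhoBarOp i (rhoBarOp (i + 1) P)) := by
  simp only [rhoBarOp, rhoOp_sub, rhoOp_braid i, rhoOp_rhoOp]
  ring

/-! ### Reduced words -/

/-- The permutations of `ℕ` supported on `[1, n]`: the encoding of `n`-permutations used below. -/
def permsOn (n : ℕ) : Finset (Equiv.Perm ℕ) := permsOfFinset (Finset.Icc 1 n)

/-- The simple reflection `s_i`. -/
def adjSwap (i : ℕ) : Equiv.Perm ℕ := Equiv.swap i (i + 1)

/-- The permutation `s_{i_t} ⋯ s_{i_1}` spelled by the word `[i_t, …, i_1]`. -/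
def wordPerm (w : List ℕ) : Equiv.Perm ℕ := (w.map adjSwap).prod

/-- `s_i u` is longer than `u`: the value `i` stands to the left of `i + 1` in `u`. -/
def IsLeftAscent (u : Equiv.Perm ℕ) (i : ℕ) : Prop := u⁻¹ i < u⁻¹ (i + 1)

/-- The number of inversions of `u` among the positions `1, …, n`. -/
def inversions (n : ℕ) (u : Equiv.Perm ℕ) : ℕ :=
  ((Finset.Icc 1 n ×ˢ Finset.Icc 1 n).filter fun x => x.1 < x.2 ∧ u x.2 < u x.1).card

/-- `w` is a reduced word in the letters `1, …, n - 1`, expressed through inversions; see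
`isReducedWord_iff` for the comparison with minimality among words. -/
def IsReduced (n : ℕ) (w : List ℕ) : Prop :=
  (∀ i ∈ w, 1 ≤ i ∧ i + 1 ≤ n) ∧ w.length = inversions n (wordPerm w)

section Permutations

variable {n i : ℕ} {u v : Equiv.Perm ℕ}

theorem mem_permsOn : u ∈ permsOn n ↔ ∀ t, t ∉ Finset.Icc 1 n → u t = t :=
  mem_perms_of_finset_iff.trans (forall_congr' fun _ => not_imp_comm)

theorem one_mem_permsOn : 1 ∈ permsOn n :=
  mem_permsOn.2 fun _ _ => rfl

theorem mul_mem_permsOn (hu : u ∈ permsOn n) (hv : v ∈ permsOn n) : u * v ∈ permsOn n :=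
  mem_permsOn.2 fun t ht => by
    rw [Equiv.Perm.mul_apply, mem_permsOn.1 hv t ht, mem_permsOn.1 hu t ht]

theorem inv_mem_permsOn (hu : u ∈ permsOn n) : u⁻¹ ∈ permsOn n :=
  mem_permsOn.2 fun t ht => Equiv.Perm.inv_eq_iff_eq.2 (mem_permsOn.1 hu t ht).symm

theorem adjSwap_mem_permsOn (hi : 1 ≤ i) (hin : i + 1 ≤ n) : adjSwap i ∈ permsOn n :=
  mem_permsOn.2 fun t ht => by
    rw [Finset.mem_Icc] at ht
    exact Equiv.swap_apply_of_ne_of_ne (by omega) (by omega)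

theorem apply_mem_Icc (hu : u ∈ permsOn n) {t : ℕ} (ht : t ∈ Finset.Icc 1 n) :
    u t ∈ Finset.Icc 1 n := by
  by_contra h
  exact h (by rwa [u.injective (mem_permsOn.1 hu _ h)])

theorem adjSwap_apply (i k : ℕ) :
    adjSwap i k = if k = i then i + 1 else if k = i + 1 then i else k :=
  Equiv.swap_apply_def i (i + 1) k

theorem adjSwap_mul_adjSwap_mul (i : ℕ) (u : Equiv.Perm ℕ) : adjSwap i * (adjSwap i * u) = u :=
  Equiv.swap_mul_self_mul i (i + 1) u

theorem inv_adjSwap_mul_apply (i k : ℕ) (u : Equiv.Perm ℕ) :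
    (adjSwap i * u)⁻¹ k = u⁻¹ (adjSwap i k) := by
  rw [mul_inv_rev, Equiv.Perm.mul_apply, adjSwap, Equiv.swap_inv]

theorem not_isLeftAscent_iff : ¬ IsLeftAscent u i ↔ u⁻¹ (i + 1) < u⁻¹ i := by
  have hne : u⁻¹ (i + 1) ≠ u⁻¹ i := u⁻¹.injective.ne i.succ_ne_self
  unfold IsLeftAscent
  omega

theorem isLeftAscent_adjSwap_mul : IsLeftAscent (adjSwap i * u) i ↔ ¬ IsLeftAscent u i := by
  rw [not_isLeftAscent_iff, IsLeftAscent, inv_adjSwap_mul_apply, inv_adjSwap_mul_apply, adjSwap,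
    Equiv.swap_apply_left, Equiv.swap_apply_right]

theorem inversions_one (n : ℕ) : inversions n 1 = 0 := by
  rw [inversions, Finset.card_eq_zero, Finset.filter_eq_empty_iff]
  exact fun x _ hx => hx.1.asymm hx.2

theorem inversions_inv (hu : u ∈ permsOn n) : inversions n u⁻¹ = inversions n u := by
  refine Finset.card_nbij' (fun x => (u⁻¹ x.2, u⁻¹ x.1)) (fun x => (u x.2, u x.1)) ?_ ?_ ?_ ?_
  · simp only [Finset.coe_filter, Finset.mem_product]
    exact fun x ⟨hx, hlt, hinv⟩ => ⟨⟨apply_mem_Icc (inv_mem_permsOn hu) hx.2,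
      apply_mem_Icc (inv_mem_permsOn hu) hx.1⟩, hinv, by simpa using hlt⟩
  · simp only [Finset.coe_filter, Finset.mem_product]
    exact fun x ⟨hx, hlt, hinv⟩ =>
      ⟨⟨apply_mem_Icc hu hx.2, apply_mem_Icc hu hx.1⟩, hinv, by simpa using hlt⟩
  all_goals exact fun x _ => by simp

theorem inversions_adjSwap_mul (hu : u ∈ permsOn n) (hi : 1 ≤ i) (hin : i + 1 ≤ n)
    (ha : IsLeftAscent u i) : inversions n (adjSwap i * u) = inversions n u + 1 := by
  have hmem := Finset.mem_Icc.1 (apply_mem_Icc (inv_mem_permsOn hu)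
    (Finset.mem_Icc.2 ⟨hi, by omega⟩ : i ∈ Finset.Icc 1 n))
  have hmem' := Finset.mem_Icc.1 (apply_mem_Icc (inv_mem_permsOn hu)
    (Finset.mem_Icc.2 ⟨by omega, hin⟩ : i + 1 ∈ Finset.Icc 1 n))
  unfold inversions
  rw [← Finset.card_insert_of_notMem (a := (u⁻¹ i, u⁻¹ (i + 1))) (by simp)]
  congr 1
  ext ⟨x, y⟩
  have hx : x = u⁻¹ i ↔ u x = i := Equiv.Perm.eq_inv_iff_eq
  have hy : y = u⁻¹ (i + 1) ↔ u y = i + 1 := Equiv.Perm.eq_inv_iff_eq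
  have hx' : x = u⁻¹ (i + 1) ↔ u x = i + 1 := Equiv.Perm.eq_inv_iff_eq
  have hy' : y = u⁻¹ i ↔ u y = i := Equiv.Perm.eq_inv_iff_eq
  have hxy : x = y ↔ u x = u y := u.injective.eq_iff.symm
  simp only [Finset.mem_filter, Finset.mem_insert, Finset.mem_product, Finset.mem_Icc,
    Prod.mk.injEq, Equiv.Perm.mul_apply, adjSwap_apply]
  unfold IsLeftAscent at ha
  grind

theorem inversions_adjSwap_mul_add_one (hu : u ∈ permsOn n) (hi : 1 ≤ i) (hin : i + 1 ≤ n)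
    (hd : ¬ IsLeftAscent u i) : inversions n (adjSwap i * u) + 1 = inversions n u := by
  rw [← inversions_adjSwap_mul (mul_mem_permsOn (adjSwap_mem_permsOn hi hin) hu) hi hin
    (isLeftAscent_adjSwap_mul.2 hd), adjSwap_mul_adjSwap_mul]

theorem eq_one_of_adjacent_lt (hu : u ∈ permsOn n)
    (h : ∀ a, 1 ≤ a → a + 1 ≤ n → u a < u (a + 1)) : u = 1 := by
  have hmono : StrictMono u := by
    have hfix : ∀ t, t < 1 ∨ n < t → u t = t := fun t ht =>
      mem_permsOn.1 hu t (by rw [Finset.mem_Icc]; omega)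
    refine strictMono_nat_of_lt_succ fun a => ?_
    rcases Nat.lt_or_ge a 1 with ha | ha
    · rw [hfix a (.inl ha), Nat.lt_one_iff.1 ha, zero_add, Nat.pos_iff_ne_zero,
        ← hfix 0 (.inl one_pos)]
      exact u.injective.ne one_ne_zero
    rcases Nat.lt_or_ge n (a + 1) with han | han
    · rw [hfix (a + 1) (.inr han)]
      rcases Nat.lt_or_ge n a with han' | han'
      · rw [hfix a (.inr han')]
        exact a.lt_succ_self
      · exact (Finset.mem_Icc.1 (apply_mem_Icc hu (Finset.mem_Icc.2 ⟨ha, han'⟩))).2.trans_lt han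
    · exact h a ha han
  ext a
  exact congrArg (· a) (Subsingleton.elim (hmono.orderIsoOfSurjective u u.surjective)
    (OrderIso.refl ℕ))

theorem exists_not_isLeftAscent (hu : u ∈ permsOn n) (hne : u ≠ 1) :
    ∃ i, 1 ≤ i ∧ i + 1 ≤ n ∧ ¬ IsLeftAscent u i := by
  by_contra! h
  exact hne (inv_eq_one.1 (eq_one_of_adjacent_lt (inv_mem_permsOn hu) h))

end Permutations

section Words

variable {n i : ℕ} {u : Equiv.Perm ℕ} {w : List ℕ}

theorem wordPerm_nil : wordPerm [] = 1 := rfl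

theorem wordPerm_cons (i : ℕ) (w : List ℕ) : wordPerm (i :: w) = adjSwap i * wordPerm w :=
  List.prod_cons

theorem permOfWord_eq (w : List ℕ) : permOfWord w = wordPerm w := by
  induction w with
  | nil => rfl
  | cons i w ih =>
    ext k
    rw [wordPerm_cons, Equiv.Perm.mul_apply, adjSwap_apply, ← ih]
    rfl

theorem wordPerm_mem_permsOn (hw : ∀ i ∈ w, 1 ≤ i ∧ i + 1 ≤ n) : wordPerm w ∈ permsOn n := by
  induction w with
  | nil => exact one_mem_permsOn
  | cons i w ih =>
    rw [List.forall_mem_cons] at hw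
    exact mul_mem_permsOn (adjSwap_mem_permsOn hw.1.1 hw.1.2) (ih hw.2)

theorem inversions_wordPerm_le (hw : ∀ i ∈ w, 1 ≤ i ∧ i + 1 ≤ n) :
    inversions n (wordPerm w) ≤ w.length := by
  induction w with
  | nil => exact (inversions_one n).le
  | cons i w ih =>
    rw [List.forall_mem_cons] at hw
    have hmem := wordPerm_mem_permsOn hw.2
    have hle := ih hw.2
    rw [wordPerm_cons, List.length_cons]
    by_cases ha : IsLeftAscent (wordPerm w) i
    · have := inversions_adjSwap_mul hmem hw.1.1 hw.1.2 ha
      omega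
    · have := inversions_adjSwap_mul_add_one hmem hw.1.1 hw.1.2 ha
      omega

theorem IsReduced.wordPerm_mem (hw : IsReduced n w) : wordPerm w ∈ permsOn n :=
  wordPerm_mem_permsOn hw.1

theorem isReduced_nil : IsReduced n [] :=
  ⟨by simp, (inversions_one n).symm⟩

theorem isReduced_cons_iff : IsReduced n (i :: w) ↔
    (1 ≤ i ∧ i + 1 ≤ n) ∧ IsReduced n w ∧ IsLeftAscent (wordPerm w) i := by
  unfold IsReduced
  rw [List.forall_mem_cons, wordPerm_cons, List.length_cons, and_assoc,
    and_assoc (c := IsLeftAscent (wordPerm w) i)]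
  refine and_congr_right fun hi => and_congr_right fun hw => ?_
  have hle := inversions_wordPerm_le hw
  by_cases ha : IsLeftAscent (wordPerm w) i
  · rw [inversions_adjSwap_mul (wordPerm_mem_permsOn hw) hi.1 hi.2 ha, add_left_inj]
    exact (and_iff_left ha).symm
  · have := inversions_adjSwap_mul_add_one (wordPerm_mem_permsOn hw) hi.1 hi.2 ha
    exact ⟨fun h => by omega, fun h => absurd h.2 ha⟩

theorem exists_isReduced (hu : u ∈ permsOn n) : ∃ w, IsReduced n w ∧ wordPerm w = u := by
  induction hk : inversions n u using Nat.strong_induction_on generalizing u with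
  | _ k ih =>
    rcases eq_or_ne u 1 with rfl | hne
    · exact ⟨[], isReduced_nil, rfl⟩
    · obtain ⟨i, hi, hin, hd⟩ := exists_not_isLeftAscent hu hne
      have hlt := inversions_adjSwap_mul_add_one hu hi hin hd
      obtain ⟨w, hw, hwu⟩ :=
        ih _ (by omega) (mul_mem_permsOn (adjSwap_mem_permsOn hi hin) hu) rfl
      refine ⟨i :: w, isReduced_cons_iff.2 ⟨⟨hi, hin⟩, hw, ?_⟩, ?_⟩
      · rwa [hwu, isLeftAscent_adjSwap_mul]
      · rw [wordPerm_cons, hwu, adjSwap_mul_adjSwap_mul]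

theorem wordFor_iff (hu : u ∈ permsOn n) :
    WordFor n w u ↔ (∀ i ∈ w, 1 ≤ i ∧ i + 1 ≤ n) ∧ wordPerm w = u := by
  rw [WordFor, permOfWord_eq]
  refine and_congr_right fun hw => ⟨fun h => ?_, fun h t _ _ => by rw [h]⟩
  ext t
  by_cases ht : t ∈ Finset.Icc 1 n
  · rw [Finset.mem_Icc] at ht
    exact h t ht.1 ht.2
  · rw [mem_permsOn.1 (wordPerm_mem_permsOn hw) t ht, mem_permsOn.1 hu t ht]

theorem isReducedWord_iff (hu : u ∈ permsOn n) :
    IsReducedWord n w u ↔ IsReduced n w ∧ wordPerm w = u := by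
  simp only [IsReducedWord, wordFor_iff hu, IsReduced]
  constructor
  · rintro ⟨⟨hw, rfl⟩, hmin⟩
    obtain ⟨v, hv, hvw⟩ := exists_isReduced hu
    have hle := hmin v ⟨hv.1, hvw⟩
    rw [hv.2, hvw] at hle
    exact ⟨⟨hw, hle.antisymm (inversions_wordPerm_le hw)⟩, rfl⟩
  · rintro ⟨⟨hw, hlen⟩, rfl⟩
    refine ⟨⟨hw, rfl⟩, fun v hv => ?_⟩
    rw [hlen, ← hv.2]
    exact inversions_wordPerm_le hv.1

end Words

section Matsumoto

variable {n i j : ℕ} {u : Equiv.Perm ℕ}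

theorem adjSwap_comm (hij : i + 1 < j) : adjSwap i * adjSwap j = adjSwap j * adjSwap i := by
  ext t
  simp only [Equiv.Perm.mul_apply, adjSwap_apply]
  grind

theorem adjSwap_braid (i : ℕ) : adjSwap i * (adjSwap (i + 1) * adjSwap i) =
    adjSwap (i + 1) * (adjSwap i * adjSwap (i + 1)) := by
  ext t
  simp only [Equiv.Perm.mul_apply, adjSwap_apply]
  grind

theorem exists_isReduced_comm (hu : u ∈ permsOn n) (hi : 1 ≤ i) (hij : i + 1 < j) (hj : j + 1 ≤ n)
    (hdi : ¬ IsLeftAscent u i) (hdj : ¬ IsLeftAscent u j) :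
    ∃ v, wordPerm (i :: j :: v) = u ∧ IsReduced n (i :: j :: v) ∧ IsReduced n (j :: i :: v) := by
  obtain ⟨v, hv, hvu⟩ := exists_isReduced (mul_mem_permsOn
    (adjSwap_mem_permsOn (show 1 ≤ j by omega) hj)
    (mul_mem_permsOn (adjSwap_mem_permsOn hi (by omega)) hu))
  have heq : wordPerm (i :: j :: v) = u := by
    rw [wordPerm_cons, wordPerm_cons, hvu, adjSwap_mul_adjSwap_mul, adjSwap_mul_adjSwap_mul]
  rw [not_isLeftAscent_iff] at hdi hdj
  have hcomm : adjSwap j * (adjSwap i * u) = adjSwap i * (adjSwap j * u) := by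
    rw [← mul_assoc, ← adjSwap_comm hij, mul_assoc]
  refine ⟨v, heq, ?_, ?_⟩
  · simp only [isReduced_cons_iff, wordPerm_cons, hvu, adjSwap_mul_adjSwap_mul, IsLeftAscent,
      inv_adjSwap_mul_apply, adjSwap_apply]
    grind
  · simp only [isReduced_cons_iff, wordPerm_cons, hvu, hcomm, adjSwap_mul_adjSwap_mul,
      IsLeftAscent, inv_adjSwap_mul_apply, adjSwap_apply]
    grind

theorem exists_isReduced_braid (hu : u ∈ permsOn n) (hi : 1 ≤ i) (hin : i + 1 + 1 ≤ n)
    (hdi : ¬ IsLeftAscent u i) (hdj : ¬ IsLeftAscent u (i + 1)) :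
    ∃ v, wordPerm (i :: (i + 1) :: i :: v) = u ∧ IsReduced n (i :: (i + 1) :: i :: v) ∧
      IsReduced n ((i + 1) :: i :: (i + 1) :: v) := by
  have hsi : adjSwap i ∈ permsOn n := adjSwap_mem_permsOn hi (by omega)
  obtain ⟨v, hv, hvu⟩ := exists_isReduced (mul_mem_permsOn hsi (mul_mem_permsOn
    (adjSwap_mem_permsOn (show 1 ≤ i + 1 by omega) hin) (mul_mem_permsOn hsi hu)))
  have heq : wordPerm (i :: (i + 1) :: i :: v) = u := by
    simp only [wordPerm_cons, hvu, adjSwap_mul_adjSwap_mul]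
  rw [not_isLeftAscent_iff] at hdi hdj
  have hbraid : adjSwap i * (adjSwap (i + 1) * (adjSwap i * u)) =
      adjSwap (i + 1) * (adjSwap i * (adjSwap (i + 1) * u)) := by
    simpa only [mul_assoc] using congrArg (· * u) (adjSwap_braid i)
  refine ⟨v, heq, ?_, ?_⟩
  · simp only [isReduced_cons_iff, wordPerm_cons, hvu, adjSwap_mul_adjSwap_mul, IsLeftAscent,
      inv_adjSwap_mul_apply, adjSwap_apply]
    grind
  · simp only [isReduced_cons_iff, wordPerm_cons, hvu, hbraid, adjSwap_mul_adjSwap_mul,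
      IsLeftAscent, inv_adjSwap_mul_apply, adjSwap_apply]
    grind

theorem exists_isReduced_cons_prod_map_eq {M : Type*} [Monoid M] {f : ℕ → M}
    (hcomm : ∀ i j, i + 1 < j → f i * f j = f j * f i)
    (hbraid : ∀ i, f i * (f (i + 1) * f i) = f (i + 1) * (f i * f (i + 1)))
    (hu : u ∈ permsOn n) (hi : 1 ≤ i ∧ i + 1 ≤ n) (hj : 1 ≤ j ∧ j + 1 ≤ n) (hij : i ≠ j)
    (hdi : ¬ IsLeftAscent u i) (hdj : ¬ IsLeftAscent u j) :
    ∃ x y, wordPerm (i :: x) = u ∧ wordPerm (j :: y) = u ∧ IsReduced n (i :: x) ∧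
      IsReduced n (j :: y) ∧ ((i :: x).map f).prod = ((j :: y).map f).prod := by
  wlog hlt : i < j generalizing i j
  · obtain ⟨x, y, hx, hy, hxr, hyr, hxy⟩ := this hj hi hij.symm hdj hdi (by omega)
    exact ⟨y, x, hy, hx, hyr, hxr, hxy.symm⟩
  rcases Nat.lt_or_ge (i + 1) j with h | h
  · obtain ⟨v, rfl, hv, hv'⟩ := exists_isReduced_comm hu hi.1 h hj.2 hdi hdj
    refine ⟨j :: v, i :: v, rfl, ?_, hv, hv', ?_⟩
    · simp only [wordPerm_cons, ← mul_assoc, adjSwap_comm h]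
    · simp only [List.map_cons, List.prod_cons, ← mul_assoc, hcomm i j h]
  · obtain rfl : j = i + 1 := Nat.le_antisymm h hlt
    obtain ⟨v, rfl, hv, hv'⟩ := exists_isReduced_braid hu hi.1 hj.2 hdi hdj
    refine ⟨(i + 1) :: i :: v, i :: (i + 1) :: v, rfl, ?_, hv, hv', ?_⟩
    · simpa only [wordPerm_cons, mul_assoc] using congrArg (· * wordPerm v) (adjSwap_braid i).symm
    · simpa only [List.map_cons, List.prod_cons, mul_assoc] using
        congrArg (· * (v.map f).prod) (hbraid i)

/-- Matsumoto's theorem for the symmetric group. -/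
theorem prod_map_eq_of_wordPerm_eq {M : Type*} [Monoid M] {f : ℕ → M}
    (hcomm : ∀ i j, i + 1 < j → f i * f j = f j * f i)
    (hbraid : ∀ i, f i * (f (i + 1) * f i) = f (i + 1) * (f i * f (i + 1)))
    {w w' : List ℕ} (hw : IsReduced n w) (hw' : IsReduced n w') (h : wordPerm w = wordPerm w') :
    (w.map f).prod = (w'.map f).prod := by
  have length_eq : ∀ {a b}, IsReduced n a → IsReduced n b → wordPerm a = wordPerm b →
      a.length = b.length := fun ha hb hab => by rw [ha.2, hb.2, hab]
  induction hk : w.length generalizing w w' with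
  | zero =>
    rw [List.length_eq_zero_iff.1 hk,
      List.length_eq_zero_iff.1 ((length_eq hw hw' h).symm.trans hk)]
  | succ k ih =>
    have same_head : ∀ {l a b}, IsReduced n (l :: a) → IsReduced n (l :: b) → a.length = k →
        wordPerm (l :: a) = wordPerm (l :: b) →
        ((l :: a).map f).prod = ((l :: b).map f).prod := by
      intro l a b ha hb hak hab
      rw [wordPerm_cons, wordPerm_cons, mul_right_inj] at hab
      rw [List.map_cons, List.map_cons, List.prod_cons, List.prod_cons,
        ih (isReduced_cons_iff.1 ha).2.1 (isReduced_cons_iff.1 hb).2.1 hab hak]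
    have descent : ∀ {l a}, IsReduced n (l :: a) → ¬ IsLeftAscent (wordPerm (l :: a)) l := by
      intro l a ha
      rw [wordPerm_cons, isLeftAscent_adjSwap_mul, not_not]
      exact (isReduced_cons_iff.1 ha).2.2
    obtain ⟨i, a, rfl⟩ := List.exists_cons_of_length_eq_add_one hk
    obtain ⟨j, b, rfl⟩ :=
      List.exists_cons_of_length_eq_add_one ((length_eq hw hw' h).symm.trans hk)
    have hak : a.length = k := Nat.succ.inj hk
    rcases eq_or_ne i j with rfl | hij
    · exact same_head hw hw' hak h
    obtain ⟨x, y, hx, hy, hxr, hyr, hxy⟩ := exists_isReduced_cons_prod_map_eq hcomm hbraid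
      hw.wordPerm_mem (isReduced_cons_iff.1 hw).1 (isReduced_cons_iff.1 hw').1 hij (descent hw)
      (h ▸ descent hw')
    have hyk : y.length = k :=
      Nat.succ.inj ((length_eq hyr hw hy).trans hk)
    rw [same_head hw hxr hak hx.symm, hxy, same_head hyr hw' hyk (hy.trans h)]

theorem applyOps_eq_prod (f : ℕ → Function.End Poly) (w : List ℕ) (P : Poly) :
    applyOps f w P = (w.map f).prod P := by
  induction w with
  | nil => rfl
  | cons i w ih => exact (congrArg (f i) ih).trans (by rw [List.map_cons, List.prod_cons]; rfl)

theorem applyOps_append (f : ℕ → Poly → Poly) (w w' : List ℕ) (P : Poly) :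
    applyOps f (w ++ w') P = applyOps f w (applyOps f w' P) := by
  induction w with
  | nil => rfl
  | cons i w ih => exact congrArg (f i) ih

end Matsumoto

/-! ### Atoms -/

section ColumnLengths

variable {n i j a : ℕ} {lam : NPartition n} {u : Equiv.Perm ℕ}

theorem le_card_filter_Icc_iff {P : ℕ → Prop} [DecidablePred P] {N : ℕ}
    (hP : ∀ k l, 1 ≤ k → k ≤ l → l ≤ N → P l → P k) (hi : 1 ≤ i) :
    i ≤ ((Finset.Icc 1 N).filter P).card ↔ i ≤ N ∧ P i := by
  constructor
  · intro h
    by_contra hN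
    have hsub : (Finset.Icc 1 N).filter P ⊆ Finset.Ico 1 i := fun k hk => by
      rw [Finset.mem_filter, Finset.mem_Icc] at hk
      rw [Finset.mem_Ico]
      refine ⟨hk.1.1, lt_of_not_ge fun hik => hN ⟨hik.trans hk.1.2, hP i k hi hik hk.1.2 hk.2⟩⟩
    have := Finset.card_le_card hsub
    rw [Nat.card_Ico] at this
    omega
  · rintro ⟨hN, hPi⟩
    have hsub : Finset.Icc 1 i ⊆ (Finset.Icc 1 N).filter P := fun k hk => by
      rw [Finset.mem_Icc] at hk
      exact Finset.mem_filter.2 ⟨Finset.mem_Icc.2 ⟨hk.1, hk.2.trans hN⟩, hP k i hk.1 hk.2 hN hPi⟩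
    simpa using Finset.card_le_card hsub

theorem le_of_le_part (hj : 1 ≤ j) (h : j ≤ lam.part i) : i ≤ n := by
  by_contra! hin
  rw [lam.outside i hin] at h
  omega

theorem le_zeta_iff (hj : 1 ≤ j) (hi : 1 ≤ i) : i ≤ zeta lam j ↔ j ≤ lam.part i := by
  rw [zeta, le_card_filter_Icc_iff (fun k l hk hkl _ h => h.trans (lam.antitone hk hkl)) hi]
  exact and_iff_right_of_imp (le_of_le_part hj)

theorem mem_Qset_iff (ha : 1 ≤ a) : a ∈ Qset lam ↔ lam.part (a + 1) < lam.part a := by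
  simp only [Qset, Finset.mem_image, Finset.mem_Icc]
  constructor
  · rintro ⟨c, ⟨hc, _⟩, hca⟩
    have hle := (le_zeta_iff hc ha).1 hca.ge
    have hlt := mt (le_zeta_iff hc (Nat.le_add_left 1 a)).2 (hca.trans_lt a.lt_succ_self).not_ge
    omega
  · intro h
    have hc : 1 ≤ lam.part a := by omega
    refine ⟨lam.part a, ⟨hc, lam.antitone le_rfl ha⟩, ?_⟩
    exact le_antisymm (Nat.lt_succ_iff.1 (lt_of_not_ge fun h' =>
      h.not_ge ((le_zeta_iff hc (Nat.le_add_left 1 a)).1 h'))) ((le_zeta_iff hc ha).2 le_rfl)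

theorem isNPerm_of_mem_permsOn (hu : u ∈ permsOn n) : IsNPerm n u := by
  rw [IsNPerm, ← Finset.coe_Icc]
  exact ⟨fun t ht => apply_mem_Icc hu ht, u.injective.injOn,
    fun t ht => ⟨u⁻¹ t, apply_mem_Icc (inv_mem_permsOn hu) ht, by simp⟩⟩

theorem inSnLam_iff (hu : u ∈ permsOn n) : InSnLam lam u ↔
    ∀ a, 1 ≤ a → a + 1 ≤ n → lam.part a = lam.part (a + 1) → u a < u (a + 1) := by
  refine (and_iff_right (isNPerm_of_mem_permsOn hu)).trans ⟨fun h a ha han heq => ?_, ?_⟩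
  · refine h a (a + 1) ha a.lt_succ_self han fun q hq => ?_
    have hne : q ≠ a := by
      rintro rfl
      exact ((mem_Qset_iff ha).1 hq).ne' heq
    omega
  · intro h i j hi hij hjn hQ
    induction j, hij using Nat.le_induction with
    | base => exact h i hi hjn (part_eq hi fun hq => by have := hQ i hq; omega)
    | succ j hij ih =>
      have hiu := ih (by omega) fun q hq => (hQ q hq).imp_right fun h => by omega
      exact hiu.trans (h j (by omega) hjn (part_eq (by omega) fun hq => by have := hQ j hq; omega))
where
  part_eq {a : ℕ} (ha : 1 ≤ a) (h : a ∉ Qset lam) : lam.part a = lam.part (a + 1) :=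
    le_antisymm (not_lt.1 (mt (mem_Qset_iff ha).2 h)) (lam.antitone ha a.le_succ)

end ColumnLengths

/-- The monomial `x_1^{e_1} ⋯ x_n^{e_n}`. -/
def xPow (n : ℕ) (e : ℕ → ℕ) : Poly := ∏ k ∈ Finset.Icc 1 n, X k ^ e k

section Atoms

variable {n i : ℕ} {lam : NPartition n} {u : Equiv.Perm ℕ} {w : List ℕ}

theorem rename_xPow (hu : u ∈ permsOn n) (e : ℕ → ℕ) :
    rename u (xPow n e) = xPow n (e ∘ ⇑u⁻¹) := by
  rw [xPow, map_prod]
  refine Finset.prod_equiv u (fun k => ⟨apply_mem_Icc hu, fun hk => ?_⟩) fun k _ => ?_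
  · simpa using apply_mem_Icc (inv_mem_permsOn hu) hk
  · simp

theorem sOp_xPow {e : ℕ → ℕ} (hi : 1 ≤ i) (hin : i + 1 ≤ n) (h : e i = e (i + 1)) :
    sOp i (xPow n e) = xPow n e := by
  refine (rename_xPow (adjSwap_mem_permsOn hi hin) e).trans (congrArg (xPow n) ?_)
  ext k
  rw [Function.comp_apply, adjSwap, Equiv.swap_inv, Equiv.swap_apply_def]
  grind

theorem lamMonomial_eq_xPow (lam : NPartition n) : lamMonomial lam = xPow n lam.part := rfl

theorem atomPoly_wordPerm (lam : NPartition n) (hw : IsReduced n w) :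
    atomPoly lam (wordPerm w) = applyOps rhoBarOp w (lamMonomial lam) := by
  have hex : ∃ v, IsReducedWord n v (wordPerm w) :=
    ⟨w, (isReducedWord_iff hw.wordPerm_mem).2 ⟨hw, rfl⟩⟩
  obtain ⟨hv, hvw⟩ := (isReducedWord_iff hw.wordPerm_mem).1 hex.choose_spec
  have hprod := prod_map_eq_of_wordPerm_eq (M := Function.End Poly) (f := rhoBarOp)
    (fun i j h => funext (rhoBarOp_comm h)) (fun i => funext (rhoBarOp_braid i)) hv hw hvw
  rw [atomPoly, dif_pos hex]
  exact (applyOps_eq_prod rhoBarOp _ _).trans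
    ((congrFun hprod _).trans (applyOps_eq_prod rhoBarOp _ _).symm)

theorem atomPoly_one (lam : NPartition n) :
    atomPoly lam (1 : Equiv.Perm ℕ) = lamMonomial lam :=
  atomPoly_wordPerm lam isReduced_nil

theorem atomPoly_adjSwap_mul (lam : NPartition n) (hu : u ∈ permsOn n) (hi : 1 ≤ i)
    (hin : i + 1 ≤ n) (ha : IsLeftAscent u i) :
    atomPoly lam ⇑(adjSwap i * u) = rhoBarOp i (atomPoly lam u) := by
  obtain ⟨w, hw, rfl⟩ := exists_isReduced hu
  rw [← wordPerm_cons, atomPoly_wordPerm lam (isReduced_cons_iff.2 ⟨⟨hi, hin⟩, hw, ha⟩),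
    atomPoly_wordPerm lam hw, applyOps]

theorem applyOps_rhoBarOp_zero (w : List ℕ) : applyOps rhoBarOp w 0 = 0 := by
  induction w with
  | nil => rfl
  | cons i w ih => rw [applyOps, ih, rhoBarOp_zero]

theorem exists_isReduced_append_singleton (hu : u ∈ permsOn n) (hi : 1 ≤ i) (hin : i + 1 ≤ n)
    (h : u (i + 1) < u i) : ∃ w, IsReduced n (w ++ [i]) ∧ wordPerm (w ++ [i]) = u := by
  have hs := adjSwap_mem_permsOn hi hin
  have hinv : (u * adjSwap i)⁻¹ = adjSwap i * u⁻¹ := by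
    rw [mul_inv_rev, adjSwap, Equiv.swap_inv]
  have hcard := inversions_adjSwap_mul_add_one (inv_mem_permsOn hu) hi hin
    (not_isLeftAscent_iff.2 (by rwa [inv_inv]))
  rw [← hinv, inversions_inv (mul_mem_permsOn hu hs), inversions_inv hu] at hcard
  obtain ⟨w, hw, hwu⟩ := exists_isReduced (mul_mem_permsOn hu hs)
  have hwi : wordPerm (w ++ [i]) = u := by
    rw [wordPerm, List.map_append, List.prod_append, ← wordPerm, hwu, List.map_singleton,
      List.prod_singleton, mul_assoc, adjSwap, Equiv.swap_mul_self, mul_one]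
  refine ⟨w, ⟨?_, ?_⟩, hwi⟩
  · rw [List.forall_mem_append, List.forall_mem_singleton]
    exact ⟨hw.1, hi, hin⟩
  · rw [hwi, List.length_append, hw.2, hwu, List.length_singleton, hcard]

theorem atomPoly_eq_zero (hu : u ∈ permsOn n) (h : ¬ InSnLam lam u) : atomPoly lam u = 0 := by
  rw [inSnLam_iff hu] at h
  push Not at h
  obtain ⟨a, ha, han, heq, hle⟩ := h
  obtain ⟨w, hw, rfl⟩ := exists_isReduced_append_singleton hu ha han
    (hle.lt_of_ne (u.injective.ne a.succ_ne_self))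
  rw [atomPoly_wordPerm lam hw, applyOps_append, applyOps, applyOps,
    lamMonomial_eq_xPow, rhoBarOp_eq_zero (sOp_xPow ha han heq), applyOps_rhoBarOp_zero]

end Atoms

/-! ### The key order -/

/-- The number of values below `m` among `u 0, …, u q`, where `u 0 = 0`. The entries of the
columns of length `q` of keys are compared through these counts. -/
def headCount (u : Equiv.Perm ℕ) (q m : ℕ) : ℕ := Nat.count (fun v => u⁻¹ v ≤ q) m

/-- The key of `u` is entrywise at most the key of `v`, expressed through counts of entries; see
`keyTab_le_iff_keyLE`. -/
def KeyLE {n : ℕ} (lam : NPartition n) (u v : Equiv.Perm ℕ) : Prop :=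
  ∀ q ∈ Qset lam, ∀ m, headCount v q m ≤ headCount u q m

section KeyOrder

variable {n i q : ℕ} {lam : NPartition n} {u v : Equiv.Perm ℕ}

theorem forall_nth_le_nth_iff {p p' : ℕ → Prop} [DecidablePred p] [DecidablePred p']
    (hp : (Set.ofPred p).Finite) (hp' : (Set.ofPred p').Finite)
    (hcard : hp'.toFinset.card = hp.toFinset.card) :
    (∀ k < hp.toFinset.card, Nat.nth p k ≤ Nat.nth p' k) ↔
      ∀ m, Nat.count p' m ≤ Nat.count p m := by
  constructor
  · intro h m
    by_contra! hlt
    have hk : Nat.count p m < hp.toFinset.card :=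
      hcard ▸ hlt.trans_le (Nat.count_le_card hp' m)
    have hnth := (h _ hk).trans_lt (Nat.nth_lt_of_lt_count hlt)
    have hcount := Nat.count_strict_mono (Nat.nth_mem _ fun _ => hk) hnth
    rw [Nat.count_nth fun _ => hk] at hcount
    exact hcount.false
  · intro h k hk
    have hcount := h (Nat.nth p' k + 1)
    rw [Nat.count_nth_succ fun _ => hcard.symm ▸ hk] at hcount
    exact Nat.lt_succ_iff.1 (Nat.nth_lt_of_lt_count hcount)

theorem finite_setOf_inv_le (u : Equiv.Perm ℕ) (q : ℕ) :
    (Set.ofPred fun v => u⁻¹ v ≤ q).Finite :=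
  (Set.finite_Iic q).preimage u⁻¹.injective.injOn

theorem card_setOf_inv_le (u : Equiv.Perm ℕ) (q : ℕ) :
    (finite_setOf_inv_le u q).toFinset.card = q + 1 := by
  have h : (finite_setOf_inv_le u q).toFinset = (Finset.Iic q).map u.toEmbedding := by
    ext v
    simp [Set.Finite.mem_toFinset]
  rw [h, Finset.card_map, Nat.card_Iic]

theorem keyTab_eq_nth (hu : u ∈ permsOn n) {j : ℕ} (h : InShape lam j i) :
    keyTab lam u j i = Nat.nth (fun v => u⁻¹ v ≤ zeta lam j) i := by
  have hset : (finite_setOf_inv_le u (zeta lam j)).toFinset =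
      insert 0 ((Finset.Icc 1 (zeta lam j)).image u) := by
    ext v
    have h0 : u 0 = 0 := mem_permsOn.1 hu 0 (by simp)
    have hmem : v ∈ (finite_setOf_inv_le u (zeta lam j)).toFinset ↔ u⁻¹ v ≤ zeta lam j :=
      Set.Finite.mem_toFinset _
    rw [hmem, Finset.mem_insert, Finset.mem_image]
    constructor
    · intro hv
      rcases (u⁻¹ v).eq_zero_or_pos with h0v | hpos
      · exact .inl ((Equiv.Perm.inv_eq_iff_eq.1 h0v).trans h0)
      · exact .inr ⟨u⁻¹ v, Finset.mem_Icc.2 ⟨hpos, hv⟩, by simp⟩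
    · rintro (rfl | ⟨t, ht, rfl⟩)
      · rw [mem_permsOn.1 (inv_mem_permsOn hu) 0 (by simp)]
        exact Nat.zero_le _
      · simpa using (Finset.mem_Icc.1 ht).2
  obtain ⟨k, rfl⟩ := Nat.exists_eq_add_of_le' h.2.1
  rw [keyTab, if_pos h, Nat.nth_eq_getD_sort (finite_setOf_inv_le u (zeta lam j)), hset,
    Finset.sort_insert, List.getD_cons_succ, Nat.add_sub_cancel]
  · exact fun b _ => b.zero_le
  · rw [Finset.mem_image]
    rintro ⟨t, ht, ht0⟩
    rw [← mem_permsOn.1 hu 0 (by simp), u.injective.eq_iff] at ht0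
    simp [ht0] at ht

theorem keyTab_le_iff_keyLE (hu : u ∈ permsOn n) (hv : v ∈ permsOn n) :
    (∀ j i, InShape lam j i → keyTab lam u j i ≤ keyTab lam v j i) ↔ KeyLE lam u v := by
  have hnth := fun q => forall_nth_le_nth_iff (finite_setOf_inv_le u q) (finite_setOf_inv_le v q)
    ((card_setOf_inv_le v q).trans (card_setOf_inv_le u q).symm)
  simp only [card_setOf_inv_le] at hnth
  simp only [KeyLE, headCount, ← hnth, Qset, Finset.forall_mem_image, Finset.mem_Icc]
  constructor
  · rintro h j ⟨hj, _⟩ k hk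
    rcases k.eq_zero_or_pos with rfl | hk0
    · rw [Nat.nth_zero_of_zero]
      · exact Nat.zero_le _
      · rw [mem_permsOn.1 (inv_mem_permsOn hu) 0 (by simp)]
        exact Nat.zero_le _
    · have hjk := (le_zeta_iff hj hk0).1 (Nat.lt_succ_iff.1 hk)
      have hshape : InShape lam j k := ⟨hj, hk0, le_of_le_part hj hjk, hjk⟩
      rw [← keyTab_eq_nth hu hshape, ← keyTab_eq_nth hv hshape]
      exact h j k hshape
  · intro h j i hshape
    have ⟨hj, hi, _, hji⟩ := hshape
    rw [keyTab_eq_nth hu hshape, keyTab_eq_nth hv hshape]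
    exact h ⟨hj, hji.trans (lam.antitone le_rfl hi)⟩ i
      (Nat.lt_succ_iff.2 ((le_zeta_iff hj hi).2 hji))

theorem headCount_succ (u : Equiv.Perm ℕ) (q m : ℕ) :
    headCount u q (m + 1) = headCount u q m + if u⁻¹ m ≤ q then 1 else 0 :=
  Nat.count_succ _ _

theorem headCount_adjSwap_mul_of_le (u : Equiv.Perm ℕ) (q : ℕ) {m : ℕ} (hm : m ≤ i) :
    headCount (adjSwap i * u) q m = headCount u q m := by
  unfold headCount
  rw [Nat.count_eq_card_filter_range, Nat.count_eq_card_filter_range]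
  refine congrArg Finset.card (Finset.filter_congr fun v hv => ?_)
  rw [Finset.mem_range] at hv
  rw [inv_adjSwap_mul_apply, adjSwap_apply, if_neg (by omega), if_neg (by omega)]

theorem headCount_adjSwap_mul_succ (u : Equiv.Perm ℕ) (q i : ℕ) :
    headCount (adjSwap i * u) q (i + 1) = headCount u q i + if u⁻¹ (i + 1) ≤ q then 1 else 0 := by
  rw [headCount_succ, headCount_adjSwap_mul_of_le u q le_rfl, inv_adjSwap_mul_apply, adjSwap_apply,
    if_pos rfl]

theorem headCount_adjSwap_mul_of_ne (u : Equiv.Perm ℕ) (q : ℕ) {m : ℕ} (hm : m ≠ i + 1) :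
    headCount (adjSwap i * u) q m = headCount u q m := by
  rcases Nat.lt_or_gt_of_ne hm with hlt | hlt
  · exact headCount_adjSwap_mul_of_le u q (Nat.lt_succ_iff.1 hlt)
  obtain ⟨m, rfl⟩ := Nat.exists_eq_add_of_le' (Nat.succ_le_of_lt hlt)
  clear hm hlt
  induction m with
  | zero =>
    rw [zero_add, headCount_succ, headCount_adjSwap_mul_succ, headCount_succ, headCount_succ,
      inv_adjSwap_mul_apply, adjSwap, Equiv.swap_apply_right, add_right_comm]
  | succ m ih =>
    rw [Nat.add_right_comm, headCount_succ, headCount_succ, ih, inv_adjSwap_mul_apply,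
      adjSwap, Equiv.swap_apply_of_ne_of_ne (by omega) (by omega)]

theorem headCount_le_adjSwap_mul_iff (hu : IsLeftAscent u i) (hv : IsLeftAscent v i) :
    (∀ m, headCount (adjSwap i * v) q m ≤ headCount u q m) ↔
      ∀ m, headCount v q m ≤ headCount u q m := by
  unfold IsLeftAscent at hu hv
  refine ⟨fun h m => ?_, fun h m => ?_⟩ <;> rcases eq_or_ne m (i + 1) with rfl | hm
  · have h₀ := h i
    have h₂ := h (i + 1 + 1)
    rw [headCount_adjSwap_mul_of_ne v q (by omega)] at h₀ h₂
    simp only [headCount_succ] at h₂ ⊢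
    grind
  · rw [← headCount_adjSwap_mul_of_ne v q hm]
    exact h m
  · have h₁ := h (i + 1)
    rw [headCount_adjSwap_mul_succ]
    simp only [headCount_succ] at h₁ ⊢
    grind
  · rw [headCount_adjSwap_mul_of_ne v q hm]
    exact h m

theorem headCount_adjSwap_mul_le_adjSwap_mul_iff (hu : IsLeftAscent u i) (hv : IsLeftAscent v i) :
    (∀ m, headCount (adjSwap i * v) q m ≤ headCount (adjSwap i * u) q m) ↔
      ∀ m, headCount v q m ≤ headCount u q m := by
  unfold IsLeftAscent at hu hv
  refine ⟨fun h m => ?_, fun h m => ?_⟩ <;> rcases eq_or_ne m (i + 1) with rfl | hm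
  · have h₀ := h i
    have h₁ := h (i + 1)
    have h₂ := h (i + 1 + 1)
    simp only [headCount_adjSwap_mul_succ] at h₁
    rw [headCount_adjSwap_mul_of_ne v q (by omega), headCount_adjSwap_mul_of_ne u q (by omega)]
      at h₀ h₂
    simp only [headCount_succ] at h₂ ⊢
    grind
  · rw [← headCount_adjSwap_mul_of_ne v q hm, ← headCount_adjSwap_mul_of_ne u q hm]
    exact h m
  · have h₀ := h i
    have h₁ := h (i + 1)
    have h₂ := h (i + 1 + 1)
    rw [headCount_adjSwap_mul_succ, headCount_adjSwap_mul_succ]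
    simp only [headCount_succ] at h₁ h₂
    grind
  · rw [headCount_adjSwap_mul_of_ne v q hm, headCount_adjSwap_mul_of_ne u q hm]
    exact h m

theorem keyLE_adjSwap_mul_right_iff (hu : IsLeftAscent u i) (hv : IsLeftAscent v i) :
    KeyLE lam u (adjSwap i * v) ↔ KeyLE lam u v :=
  forall₂_congr fun _ _ => headCount_le_adjSwap_mul_iff hu hv

theorem keyLE_adjSwap_mul_adjSwap_mul_iff (hu : IsLeftAscent u i) (hv : IsLeftAscent v i) :
    KeyLE lam (adjSwap i * u) (adjSwap i * v) ↔ KeyLE lam u v :=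
  forall₂_congr fun _ _ => headCount_adjSwap_mul_le_adjSwap_mul_iff hu hv

theorem keyLE_refl (lam : NPartition n) (u : Equiv.Perm ℕ) : KeyLE lam u u :=
  fun _ _ _ => le_rfl

theorem inv_le_of_keyLE_one (h : KeyLE lam u 1) (hq : q ∈ Qset lam) {t : ℕ} (ht : t ≤ q) :
    u⁻¹ t ≤ q := by
  have hone : headCount 1 q (q + 1) = q + 1 :=
    Nat.count_iff_forall.2 fun v hv => Nat.lt_succ_iff.1 hv
  have hcount : headCount u q (q + 1) = q + 1 :=
    le_antisymm (Nat.count_le _) (hone.ge.trans (h q hq (q + 1)))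
  exact Nat.count_iff_forall.1 hcount t (Nat.lt_succ_iff.2 ht)

theorem eq_one_of_keyLE_one (hu : u ∈ permsOn n) (hlam : InSnLam lam u) (h : KeyLE lam u 1) :
    u = 1 := by
  refine eq_one_of_adjacent_lt hu fun a ha han => ?_
  rcases (lam.antitone ha a.le_succ).eq_or_lt with heq | hlt
  · exact (inSnLam_iff hu).1 hlam a ha han heq.symm
  · have hinv : ∀ {t}, t ≤ a → u⁻¹ t ≤ a := fun ht =>
      inv_le_of_keyLE_one h ((mem_Qset_iff ha).2 hlt) ht
    have hua : u a ≤ a := by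
      obtain ⟨t, ht, hta⟩ := Finset.surjOn_of_injOn_of_card_le ⇑u⁻¹
        (s := Finset.Iic a) (t := Finset.Iic a)
        (fun t ht => Finset.mem_coe.2 (Finset.mem_Iic.2 (hinv (Finset.mem_Iic.1 ht))))
        u⁻¹.injective.injOn le_rfl (Finset.mem_coe.2 (Finset.mem_Iic.2 le_rfl))
      rw [← Equiv.Perm.inv_eq_iff_eq.1 hta]
      exact Finset.mem_Iic.1 ht
    refine hua.trans_lt (lt_of_not_ge fun hle => ?_)
    simpa using hinv hle

end KeyOrder

/-! ### The Demazure character formula -/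

section DemazureFormula

variable {n i : ℕ} {lam : NPartition n} {w : List ℕ}

theorem sum_permsOn_eq_sum_leftAscents {M : Type*} [AddCommMonoid M] (f : Equiv.Perm ℕ → M)
    (hi : 1 ≤ i) (hin : i + 1 ≤ n) :
    ∑ u ∈ permsOn n, f u =
      ∑ u ∈ permsOn n with IsLeftAscent u i, (f u + f (adjSwap i * u)) := by
  rw [← Finset.sum_filter_add_sum_filter_not (permsOn n) (IsLeftAscent · i),
    Finset.sum_add_distrib]
  congr 1
  have hs := adjSwap_mem_permsOn hi hin
  simp only [← isLeftAscent_adjSwap_mul]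
  refine Finset.sum_nbij' (adjSwap i * ·) (adjSwap i * ·) ?_ ?_ ?_ ?_ ?_
  · simp only [Finset.mem_filter]
    exact fun u hu => ⟨mul_mem_permsOn hs hu.1, hu.2⟩
  · simp only [Finset.mem_filter, adjSwap_mul_adjSwap_mul]
    exact fun u hu => ⟨mul_mem_permsOn hs hu.1, hu.2⟩
  all_goals exact fun u _ => by simp only [adjSwap_mul_adjSwap_mul]

/-- `ρ_i` kills the atoms at left descents, because `ρ_i ρ̄_i = 0`, and completes the atom of a
left ascent `u` by that of `s_i u`. -/
theorem rhoOp_sum_atomPoly (lam : NPartition n) {B B' : Equiv.Perm ℕ → Prop} (hi : 1 ≤ i)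
    (hin : i + 1 ≤ n) (hB : ∀ u, IsLeftAscent u i → (B' u ↔ B u))
    (hB' : ∀ u, IsLeftAscent u i → (B' (adjSwap i * u) ↔ B u)) :
    rhoOp i (∑ u ∈ permsOn n with B u, atomPoly lam u) =
      ∑ u ∈ permsOn n with B' u, atomPoly lam u := by
  rw [Finset.sum_filter, Finset.sum_filter, sum_permsOn_eq_sum_leftAscents _ hi hin,
    sum_permsOn_eq_sum_leftAscents _ hi hin, rhoOp_sum]
  refine Finset.sum_congr rfl fun u hu => ?_
  obtain ⟨hu, ha⟩ := Finset.mem_filter.1 hu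
  have hatom := atomPoly_adjSwap_mul lam hu hi hin ha
  have hdesc : rhoOp i (if B (adjSwap i * u) then atomPoly lam ⇑(adjSwap i * u) else 0) = 0 := by
    split_ifs
    · rw [hatom, rhoOp_rhoBarOp]
    · exact rhoOp_zero i
  rw [rhoOp_add, hdesc, add_zero, hatom]
  simp only [hB u ha, hB' u ha]
  split_ifs
  · rw [rhoBarOp, add_sub_cancel]
  · rw [rhoOp_zero, add_zero]

theorem applyOps_rhoOp_eq_sum_keyLE (lam : NPartition n) (hw : IsReduced n w) :
    applyOps rhoOp w (lamMonomial lam) =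
      ∑ u ∈ permsOn n with KeyLE lam u (wordPerm w), atomPoly lam u := by
  induction w with
  | nil =>
    rw [applyOps, wordPerm_nil, Finset.sum_eq_single_of_mem 1, atomPoly_one]
    · exact Finset.mem_filter.2 ⟨one_mem_permsOn, keyLE_refl lam 1⟩
    · intro u hu hne
      obtain ⟨hu, hle⟩ := Finset.mem_filter.1 hu
      exact atomPoly_eq_zero hu fun hlam => hne (eq_one_of_keyLE_one hu hlam hle)
  | cons i w ih =>
    obtain ⟨⟨hi, hin⟩, hw, ha⟩ := isReduced_cons_iff.1 hw
    rw [applyOps, ih hw, wordPerm_cons]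
    exact rhoOp_sum_atomPoly lam hi hin (fun u hu => keyLE_adjSwap_mul_right_iff hu ha)
      fun u hu => keyLE_adjSwap_mul_adjSwap_mul_iff hu ha

theorem sum_atomPoly_filter_inSnLam (lam : NPartition n) (s : Finset (Equiv.Perm ℕ))
    (hs : s ⊆ permsOn n) :
    ∑ u ∈ s.filter fun u : Equiv.Perm ℕ => InSnLam lam u, atomPoly lam u =
      ∑ u ∈ s, atomPoly lam u :=
  Finset.sum_filter_of_ne fun _ hu hne => not_not.1 (mt (atomPoly_eq_zero (hs hu)) hne)

theorem sOp_sum_atomPoly (lam : NPartition n) (hi : 1 ≤ i) (hin : i + 1 ≤ n) :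
    sOp i (∑ u ∈ permsOn n, atomPoly lam u) = ∑ u ∈ permsOn n, atomPoly lam u := by
  have h := rhoOp_sum_atomPoly lam (B := fun _ => True) (B' := fun _ => True) hi hin
    (fun _ _ => Iff.rfl) fun _ _ => Iff.rfl
  rw [Finset.filter_true] at h
  rw [← h, sOp_rhoOp]

end DemazureFormula

/-! ### Alternants -/

section Alternants

variable {R : Type*} [CommRing R] {m n : ℕ}

theorem det_eq_of_forall_col_eq_add_smul_succ {A B : Matrix (Fin (m + 1)) (Fin (m + 1)) R}
    (c : Fin m → R) (hlast : ∀ i, A i (Fin.last m) = B i (Fin.last m))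
    (hcol : ∀ i (j : Fin m), A i j.castSucc = B i j.castSucc + c j * A i j.succ) :
    A.det = B.det := by
  rw [← Matrix.det_submatrix_equiv_self Fin.revPerm A,
    ← Matrix.det_submatrix_equiv_self Fin.revPerm B]
  refine Matrix.det_eq_of_forall_col_eq_smul_add_pred (fun j => c j.rev) (fun i => ?_) fun i j => ?_
  · simpa using hlast i.rev
  · simpa [Fin.rev_succ, Fin.rev_castSucc] using hcol i.rev j.rev

theorem det_of_sum_cols {ι : Type*} (s : Fin m → Finset ι)
    (g : Fin m → Fin m → ι → R) :
    (Matrix.of fun i j => ∑ k ∈ s j, g i j k).det =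
      ∑ f ∈ Fintype.piFinset s, (Matrix.of fun i j => g i j (f j)).det := by
  have hcols : (Matrix.of fun i j => ∑ k ∈ s j, g i j k).transpose =
      fun j => ∑ k ∈ s j, fun i => g i j k := by
    ext j i
    simp
  rw [← Matrix.det_transpose, hcols]
  refine ((Matrix.detRowAlternating (n := Fin m) (R := R)).toMultilinearMap.map_sum_finset
    (fun j k => fun i => g i j k) s).trans (Finset.sum_congr rfl fun f _ => ?_)
  exact Matrix.det_transpose (Matrix.of fun i j => g i j (f j))

theorem pow_sub_pow_mul_pow_eq_sub_mul_sum (x y : R) {a b : ℕ} (r : ℕ) (h : b ≤ a) :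
    x ^ (a + (r + 1)) - y ^ (a - b + 1) * x ^ (b + r) =
      (x - y) * ∑ k ∈ Finset.Icc b a, y ^ (a - k) * x ^ (k + r) := by
  induction a, h using Nat.le_induction with
  | base =>
    rw [Finset.Icc_self, Finset.sum_singleton, Nat.sub_self]
    ring
  | succ a hba ih =>
    have hsum : ∑ k ∈ Finset.Icc b a, y ^ (a + 1 - k) * x ^ (k + r) =
        y * ∑ k ∈ Finset.Icc b a, y ^ (a - k) * x ^ (k + r) := by
      rw [Finset.mul_sum]
      refine Finset.sum_congr rfl fun k hk => ?_
      rw [Nat.sub_add_comm (Finset.mem_Icc.1 hk).2, pow_succ']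
      ring
    rw [Finset.sum_Icc_succ_top (by omega), hsum, mul_add, mul_left_comm, ← ih, Nat.sub_self,
      Nat.sub_add_comm hba]
    ring

/-- The alternant `a_{e+δ} = det (x_i ^ (e_j + n - j))` with `δ = (n - 1, …, 1, 0)`; for `e = 0`
it is the Vandermonde determinant. -/
def alternant (x : Fin n → R) (e : Fin n → ℕ) : R :=
  (Matrix.of fun i j => x i ^ (e j + (j.rev : ℕ))).det

/-- The sequences `f` with `e_1 ≥ f_1 ≥ e_2 ≥ f_2 ≥ ⋯ ≥ f_m ≥ e_{m+1}`. -/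
def interlacing (e : Fin (m + 1) → ℕ) : Finset (Fin m → ℕ) :=
  Fintype.piFinset fun j => Finset.Icc (e j.succ) (e j.castSucc)

/-- Subtracting from each column a multiple of the next one, chosen to clear the last row, leaves
the factors `x i - x (Fin.last m)` times complete homogeneous columns. -/
theorem alternant_succ (x : Fin (m + 1) → R) {e : Fin (m + 1) → ℕ} (he : Antitone e) :
    alternant x e = x (Fin.last m) ^ e (Fin.last m) *
      (∏ i : Fin m, (x i.castSucc - x (Fin.last m))) *
      ∑ f ∈ interlacing e, (∏ j, x (Fin.last m) ^ (e j.castSucc - f j)) *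
        alternant (fun i => x i.castSucc) f := by
  set y := x (Fin.last m)
  let h (i : Fin (m + 1)) (j : Fin m) (k : ℕ) : R := y ^ (e j.castSucc - k) * x i ^ (k + j.rev)
  let B : Matrix (Fin (m + 1)) (Fin (m + 1)) R := Matrix.of fun i => Fin.snoc
    (fun j => (x i - y) * ∑ k ∈ Finset.Icc (e j.succ) (e j.castSucc), h i j k)
    (x i ^ e (Fin.last m))
  have hB (i j) : B i (Fin.castSucc j) =
      (x i - y) * ∑ k ∈ Finset.Icc (e j.succ) (e j.castSucc), h i j k := by simp [B]
  have hdet : alternant x e = B.det := by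
    refine det_eq_of_forall_col_eq_add_smul_succ
      (fun j => y ^ (e j.castSucc - e j.succ + 1)) (fun i => by simp [B]) fun i j => ?_
    rw [hB, ← pow_sub_pow_mul_pow_eq_sub_mul_sum _ _ _ (he j.castSucc_le_succ), Matrix.of_apply,
      Matrix.of_apply, Fin.rev_castSucc, Fin.rev_succ, Fin.val_succ, Fin.val_castSucc,
      sub_add_cancel]
  have hlast (j : Fin m) : B (Fin.last m) j.castSucc = 0 := by rw [hB, sub_self, zero_mul]
  have hminor : B.submatrix (Fin.last m).succAbove (Fin.last m).succAbove =
      Matrix.of fun i j : Fin m => (x i.castSucc - y) * (Matrix.of fun i j : Fin m =>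
        ∑ k ∈ Finset.Icc (e j.succ) (e j.castSucc), h i.castSucc j k) i j := by
    ext i j
    rw [Matrix.submatrix_apply, Fin.succAbove_last, hB, Matrix.of_apply, Matrix.of_apply]
  have hcorner : B (Fin.last m) (Fin.last m) = y ^ e (Fin.last m) := by simp [B, y]
  rw [hdet, Matrix.det_succ_row _ (Fin.last m), Fin.sum_univ_castSucc,
    Finset.sum_eq_zero fun j _ => by rw [hlast, mul_zero, zero_mul], zero_add, hminor,
    Matrix.det_mul_column, det_of_sum_cols, hcorner, Even.neg_one_pow ⟨_, rfl⟩, one_mul, mul_assoc]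
  exact congrArg _ (congrArg _ (Finset.sum_congr rfl fun f _ => Matrix.det_mul_row _ _))

theorem alternant_zero_succ (x : Fin (m + 1) → R) :
    alternant x 0 = (∏ i : Fin m, (x i.castSucc - x (Fin.last m))) *
      alternant (fun i => x i.castSucc) 0 := by
  have hzero : interlacing (0 : Fin (m + 1) → ℕ) = {0} := by
    ext f
    simp [interlacing, funext_iff]
  rw [alternant_succ x (e := 0) antitone_const, hzero]
  simp

theorem alternant_zero_ne_zero [IsDomain R] {x : Fin n → R} (hx : Function.Injective x) :
    alternant x 0 ≠ 0 := by
  induction n with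
  | zero => simp [alternant]
  | succ m ih =>
    rw [alternant_zero_succ]
    refine mul_ne_zero (Finset.prod_ne_zero_iff.2 fun i _ => sub_ne_zero.2 fun h => ?_)
      (ih (hx.comp (Fin.castSucc_injective m)))
    exact i.castSucc_lt_last.ne (hx h)

end Alternants

/-! ### Antisymmetrization -/

section Antisymmetrization

variable {n i : ℕ} {u : Equiv.Perm ℕ} {F : Poly}

/-- The embedding of the symmetric group of `Fin n` into the permutations of `ℕ` obtained by
relabelling `Fin n` as `{1, …, n}`. -/
def finPerm (n : ℕ) : Equiv.Perm (Fin n) →* Equiv.Perm ℕ :=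
  Equiv.Perm.viaEmbeddingHom ⟨fun j : Fin n => (j : ℕ) + 1,
    Nat.succ_injective.comp Fin.val_injective⟩

theorem finPerm_apply_succ (s : Equiv.Perm (Fin n)) (j : Fin n) :
    finPerm n s (j + 1) = s j + 1 :=
  s.viaEmbedding_apply _ j

theorem finPerm_mem_permsOn (s : Equiv.Perm (Fin n)) : finPerm n s ∈ permsOn n := by
  refine mem_permsOn.2 fun t ht => s.viaEmbedding_apply_of_notMem _ t ?_
  rintro ⟨j, rfl⟩
  exact ht (Finset.mem_Icc.2 ⟨Nat.succ_pos _, j.is_lt⟩)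

theorem exists_finPerm_eq_adjSwap (hi : 1 ≤ i) (hin : i + 1 ≤ n) :
    ∃ s : Equiv.Perm (Fin n), s.sign = -1 ∧ finPerm n s = adjSwap i := by
  obtain ⟨a, rfl⟩ := Nat.exists_eq_add_of_le' hi
  refine ⟨Equiv.swap ⟨a, by omega⟩ ⟨a + 1, by omega⟩, Equiv.Perm.sign_swap (by simp), ?_⟩
  ext t
  by_cases ht : t ∈ Finset.Icc 1 n
  · obtain ⟨j, rfl⟩ : ∃ j : Fin n, t = j + 1 := by
      obtain ⟨h1, hn⟩ := Finset.mem_Icc.1 ht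
      exact ⟨⟨t - 1, by omega⟩, (Nat.sub_add_cancel h1).symm⟩
    rw [finPerm_apply_succ, adjSwap, Equiv.swap_apply_def, Equiv.swap_apply_def]
    grind
  · rw [mem_permsOn.1 (finPerm_mem_permsOn _) t ht,
      mem_permsOn.1 (adjSwap_mem_permsOn hi hin) t ht]

/-- The antisymmetrization `f ↦ ∑ sgn(σ) σ(f)` over the symmetric group on `x_1, …, x_n`. -/
def antisymmetrize (n : ℕ) : Poly →ₗ[ℚ] Poly :=
  ∑ s : Equiv.Perm (Fin n), (s.sign : ℤ) • (rename (finPerm n s)).toLinearMap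

theorem antisymmetrize_apply (n : ℕ) (f : Poly) :
    antisymmetrize n f = ∑ s : Equiv.Perm (Fin n), s.sign • rename (finPerm n s) f := by
  simp [antisymmetrize, Units.smul_def]

theorem antisymmetrize_sOp (hi : 1 ≤ i) (hin : i + 1 ≤ n) (f : Poly) :
    antisymmetrize n (sOp i f) = -antisymmetrize n f := by
  obtain ⟨t, ht, hti⟩ := exists_finPerm_eq_adjSwap hi hin
  rw [antisymmetrize_apply, antisymmetrize_apply, ← Finset.sum_neg_distrib]
  refine Fintype.sum_equiv (Equiv.mulRight t) _ _ fun s => ?_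
  rw [Equiv.coe_mulRight, map_mul, map_mul, hti, ht, mul_neg, mul_one, Units.neg_smul, neg_neg, sOp,
    rename_rename]
  rfl

theorem antisymmetrize_eq_zero (hi : 1 ≤ i) (hin : i + 1 ≤ n) {f : Poly} (hf : sOp i f = f) :
    antisymmetrize n f = 0 := by
  have h := antisymmetrize_sOp hi hin f
  rwa [hf, self_eq_neg] at h

theorem rename_eq_self_of_sOp (hF : ∀ i, 1 ≤ i → i + 1 ≤ n → sOp i F = F) (hu : u ∈ permsOn n) :
    rename u F = F := by
  obtain ⟨w, hw, rfl⟩ := exists_isReduced hu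
  have hw' := hw.1
  clear hw hu
  induction w with
  | nil => exact rename_id_apply F
  | cons i w ih =>
    obtain ⟨⟨hi, hin⟩, hw⟩ := List.forall_mem_cons.1 hw'
    rw [wordPerm_cons, Equiv.Perm.coe_mul, ← rename_rename, ih hw]
    exact hF i hi hin

theorem antisymmetrize_mul (hF : ∀ i, 1 ≤ i → i + 1 ≤ n → sOp i F = F) (f : Poly) :
    antisymmetrize n (f * F) = antisymmetrize n f * F := by
  simp only [antisymmetrize_apply, Finset.sum_mul, map_mul,
    rename_eq_self_of_sOp hF (finPerm_mem_permsOn _), smul_mul_assoc]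

theorem prod_Icc_one_eq_prod_fin {M : Type*} [CommMonoid M] (n : ℕ) (f : ℕ → M) :
    ∏ k ∈ Finset.Icc 1 n, f k = ∏ j : Fin n, f (j + 1) := by
  rw [← Finset.prod_range fun k => f (k + 1), Finset.range_eq_Ico, Finset.prod_Ico_add' f]
  rfl

/-- The exponents `δ = (n - 1, …, 1, 0)`. -/
def staircase (n k : ℕ) : ℕ := n - k

theorem antisymmetrize_xPow (n : ℕ) (e : ℕ → ℕ) :
    antisymmetrize n (xPow n (e + staircase n)) =
      alternant (fun j : Fin n => (X (j + 1) : Poly)) fun j => e (j + 1) := by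
  rw [antisymmetrize_apply, alternant, Matrix.det_apply]
  refine Finset.sum_congr rfl fun s _ => congrArg _ ?_
  rw [xPow, prod_Icc_one_eq_prod_fin, map_prod]
  refine Finset.prod_congr rfl fun j _ => ?_
  rw [map_pow, rename_X, finPerm_apply_succ, Matrix.of_apply, Pi.add_apply, staircase, Fin.val_rev]

theorem xPow_add (n : ℕ) (e f : ℕ → ℕ) : xPow n (e + f) = xPow n e * xPow n f := by
  simp only [xPow, Pi.add_apply, pow_add, Finset.prod_mul_distrib]

theorem xPow_single (hi : i ∈ Finset.Icc 1 n) : xPow n (Pi.single i 1) = X i := by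
  rw [xPow, Finset.prod_eq_single_of_mem i hi fun k _ hk => by rw [Pi.single_eq_of_ne hk, pow_zero],
    Pi.single_eq_same, pow_one]

/-- Up to a factor symmetric in `x_i, x_{i+1}`, the monomial `x^δ` is `x_i`, and `x_i ρ̄_i f` is
symmetric in `x_i, x_{i+1}`. -/
theorem antisymmetrize_staircase_mul_rhoBarOp (hi : 1 ≤ i) (hin : i + 1 ≤ n) (f : Poly) :
    antisymmetrize n (xPow n (staircase n) * rhoBarOp i f) = 0 := by
  set e : ℕ → ℕ := staircase n - Pi.single i 1
  have he : staircase n = e + Pi.single i 1 := by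
    ext k
    by_cases hk : k = i
    · subst hk
      simp [e, staircase]
      omega
    · simp [e, hk]
  have hei : e i = e (i + 1) := by
    simp [e, staircase, Nat.sub_sub]
  rw [he, xPow_add, xPow_single (Finset.mem_Icc.2 ⟨hi, by omega⟩), mul_assoc]
  refine antisymmetrize_eq_zero hi hin ?_
  rw [sOp_mul, sOp_xPow hi hin hei, sOp_X_mul_rhoBarOp]

theorem antisymmetrize_staircase_mul_atomPoly (lam : NPartition n) (hu : u ∈ permsOn n)
    (hne : u ≠ 1) : antisymmetrize n (xPow n (staircase n) * atomPoly lam u) = 0 := by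
  obtain ⟨i, hi, hin, hd⟩ := exists_not_isLeftAscent hu hne
  have h := atomPoly_adjSwap_mul lam (mul_mem_permsOn (adjSwap_mem_permsOn hi hin) hu) hi hin
    (isLeftAscent_adjSwap_mul.2 hd)
  rw [adjSwap_mul_adjSwap_mul] at h
  rw [h, antisymmetrize_staircase_mul_rhoBarOp hi hin]

/-- The row lengths `λ_1, …, λ_n`, indexed from `0`. -/
def rows (lam : NPartition n) (j : Fin n) : ℕ := lam.part (j + 1)

theorem alternant_zero_mul_sum_atomPoly (lam : NPartition n) :
    alternant (fun j : Fin n => (X (j + 1) : Poly)) 0 * ∑ u ∈ permsOn n, atomPoly lam u =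
      alternant (fun j : Fin n => (X (j + 1) : Poly)) (rows lam) :=
  calc
    _ = antisymmetrize n (xPow n (0 + staircase n) * ∑ u ∈ permsOn n, atomPoly lam u) := by
      rw [antisymmetrize_mul fun i => sOp_sum_atomPoly lam, antisymmetrize_xPow]
      rfl
    _ = antisymmetrize n (xPow n (staircase n) * atomPoly lam (1 : Equiv.Perm ℕ)) := by
      rw [zero_add, Finset.mul_sum, map_sum]
      exact Finset.sum_eq_single_of_mem 1 one_mem_permsOn fun u hu hne =>
        antisymmetrize_staircase_mul_atomPoly lam hu hne
    _ = _ := by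
      rw [atomPoly_one, lamMonomial_eq_xPow, mul_comm, ← xPow_add, antisymmetrize_xPow]
      rfl

end Antisymmetrization

/-! ### Branching of Schur polynomials -/

section Tableaux

variable {n i c d : ℕ} {lam : NPartition n} {T : ℕ → ℕ → ℕ}

theorem InShape.left (h : InShape lam (c + 1) i) (hc : 1 ≤ c) : InShape lam c i :=
  ⟨hc, h.2.1, h.2.2.1, (Nat.le_succ c).trans h.2.2.2⟩

theorem InShape.up (h : InShape lam c (i + 1)) (hi : 1 ≤ i) : InShape lam c i :=
  ⟨h.1, hi, (Nat.le_succ i).trans h.2.2.1, h.2.2.2.trans (lam.antitone hi i.le_succ)⟩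

theorem mem_boxes_iff {b : ℕ × ℕ} : b ∈ boxes lam ↔ InShape lam b.1 b.2 := by
  rw [boxes, Finset.mem_filter, Finset.mem_product, Finset.mem_Icc, Finset.mem_Icc]
  exact ⟨fun ⟨⟨hc, hi⟩, h⟩ => ⟨hc.1, hi.1, hi.2, h⟩,
    fun ⟨hc, hi, hin, h⟩ => ⟨⟨⟨hc, h.trans (lam.antitone le_rfl hi)⟩, hi, hin⟩, h⟩⟩

/-- The normalized semistandard tableaux over which the Schur polynomial `s_λ` sums. -/
def IsTableau (lam : NPartition n) (T : ℕ → ℕ → ℕ) : Prop := IsSSYT lam T ∧ ZeroOutside lam T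

namespace IsTableau

theorem of_pos (hzero : ZeroOutside lam T) (hent : ∀ c i, InShape lam c i → 1 ≤ T c i ∧ T c i ≤ n)
    (hrow : ∀ c i, 1 ≤ c → InShape lam (c + 1) i → T c i ≤ T (c + 1) i)
    (hcol : ∀ c i, 1 ≤ i → InShape lam c (i + 1) → T c i < T c (i + 1)) : IsTableau lam T := by
  refine ⟨⟨hent, fun c i h => ?_, fun c i h => ?_⟩, hzero⟩
  · rcases Nat.eq_zero_or_pos c with rfl | hc
    · rw [hzero 0 i fun h => absurd h.1 (by omega)]
      exact Nat.zero_le _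
    · exact hrow c i hc h
  · rcases Nat.eq_zero_or_pos i with rfl | hi
    · rw [hzero c 0 fun h => absurd h.2.1 (by omega)]
      exact (hent c 1 h).1
    · exact hcol c i hi h

theorem le_of_le (hT : IsTableau lam T) (hc : 1 ≤ c) (hcd : c ≤ d) (hd : InShape lam d i) :
    T c i ≤ T d i := by
  induction d, hcd using Nat.le_induction with
  | base => exact le_rfl
  | succ d hcd ih => exact (ih (hd.left (hc.trans hcd))).trans (hT.1.2.1 d i hd)

theorem row_le (hT : IsTableau lam T) (h : InShape lam c i) : i ≤ T c i := by
  induction i with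
  | zero => exact Nat.zero_le _
  | succ i ih =>
    rcases Nat.eq_zero_or_pos i with rfl | hi
    · exact (hT.1.1 c 1 h).1
    · exact (ih (h.up hi)).trans_lt (hT.1.2.2 c i h)

end IsTableau

theorem finite_setOf_isTableau (lam : NPartition n) : {T | IsTableau lam T}.Finite := by
  refine Set.Finite.of_injOn (f := fun T (b : boxes lam) => Fin.ofNat (n + 1) (T b.1.1 b.1.2))
    (t := Set.univ) (fun _ _ => Set.mem_univ _) (fun T hT T' hT' h => ?_) Set.finite_univ
  ext c i
  by_cases hci : InShape lam c i
  · have hval := congrArg Fin.val (congrFun h ⟨(c, i), mem_boxes_iff.2 hci⟩)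
    simpa only [Fin.val_ofNat, Nat.mod_eq_of_lt (Nat.lt_succ_of_le (hT.1.1 c i hci).2),
      Nat.mod_eq_of_lt (Nat.lt_succ_of_le (hT'.1.1 c i hci).2)] using hval
  · rw [hT.2 c i hci, hT'.2 c i hci]

/-- The set of tableaux of shape `λ`. -/
def tableaux (lam : NPartition n) : Finset (ℕ → ℕ → ℕ) := (finite_setOf_isTableau lam).toFinset

theorem mem_tableaux : T ∈ tableaux lam ↔ IsTableau lam T :=
  (finite_setOf_isTableau lam).mem_toFinset

/-- The Schur polynomial `s_λ(x_1, …, x_n)`. -/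
def schur (lam : NPartition n) : Poly := ∑ T ∈ tableaux lam, weight lam T

theorem schur_of_isEmpty (lam : NPartition 0) : schur lam = 1 := by
  have hempty (c i) : ¬ InShape lam c i := fun h => by have := h.2; omega
  have hset : tableaux lam = {0} := by
    ext T
    rw [mem_tableaux, Finset.mem_singleton]
    refine ⟨fun hT => funext₂ fun c i => hT.2 c i (hempty c i), ?_⟩
    rintro rfl
    exact .of_pos (fun _ _ _ => rfl) (fun c i h => (hempty c i h).elim)
      (fun c i _ h => (hempty _ i h).elim) fun c i _ h => (hempty c _ h).elim
  rw [schur, hset, Finset.sum_singleton, weight]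
  exact Finset.prod_eq_one fun b hb => (hempty _ _ (mem_boxes_iff.1 hb)).elim

theorem weight_eq_prod_rows (lam : NPartition n) (T : ℕ → ℕ → ℕ) :
    weight lam T = ∏ i ∈ Finset.Icc 1 n, ∏ c ∈ Finset.Icc 1 (lam.part i), X (T c i) := by
  rw [weight, ← Finset.prod_finset_product_right' (boxes lam)]
  intro b
  rw [mem_boxes_iff, InShape, Finset.mem_Icc, Finset.mem_Icc]
  tauto

end Tableaux

section Branching

variable {m n i c : ℕ} {lam : NPartition (m + 1)} {mu : NPartition m} {T S : ℕ → ℕ → ℕ}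

/-- The partition whose row lengths are the antitone sequence `f`; for other `f` the rows are
enlarged as needed. -/
def NPartition.ofRows (f : Fin n → ℕ) : NPartition n where
  part k := (Finset.univ.filter fun j : Fin n => k ≤ j + 1).sup f
  antitone _ _ _ h := Finset.sup_mono fun j hj => by
    rw [Finset.mem_filter] at hj ⊢
    exact ⟨hj.1, h.trans hj.2⟩
  outside k hk := by
    rw [Finset.filter_false_of_mem fun j _ => by omega]
    rfl

theorem rows_ofRows {f : Fin n → ℕ} (hf : Antitone f) : rows (.ofRows f) = f := by
  ext j
  dsimp only [rows, NPartition.ofRows]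
  refine le_antisymm (Finset.sup_le fun k hk => hf ?_)
    (Finset.le_sup (Finset.mem_filter.2 ⟨Finset.mem_univ j, le_rfl⟩))
  simpa using hk

theorem antitone_rows (lam : NPartition n) : Antitone (rows lam) := fun _ _ h =>
  lam.antitone (Nat.succ_pos _) (Nat.succ_le_succ h)

theorem antitone_of_mem_interlacing {e : Fin (m + 1) → ℕ} (he : Antitone e) {f : Fin m → ℕ}
    (hf : f ∈ interlacing e) : Antitone f := by
  intro j k hjk
  rcases hjk.eq_or_lt with rfl | hjk
  · exact le_rfl
  · simp only [interlacing, Fintype.mem_piFinset, Finset.mem_Icc] at hf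
    exact (hf k).2.trans ((he (Fin.succ_le_castSucc_iff.2 hjk)).trans (hf j).1)

/-- `λ_1 ≥ μ_1 ≥ λ_2 ≥ ⋯ ≥ μ_m ≥ λ_{m+1}`. -/
def Interlaces (lam : NPartition (m + 1)) (mu : NPartition m) : Prop :=
  ∀ k, 1 ≤ k → k ≤ m → lam.part (k + 1) ≤ mu.part k ∧ mu.part k ≤ lam.part k

theorem Interlaces.part_le (h : Interlaces lam mu) (hi : 1 ≤ i) : mu.part i ≤ lam.part i := by
  rcases le_or_gt i m with him | him
  · exact (h i hi him).2
  · rw [mu.outside i him]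
    exact Nat.zero_le _

theorem Interlaces.inShape (h : Interlaces lam mu) (hci : InShape mu c i) : InShape lam c i :=
  ⟨hci.1, hci.2.1, hci.2.2.1.trans m.le_succ, hci.2.2.2.trans (h.part_le hci.2.1)⟩

/-- `μ` is the shape formed by the entries of `T` that are at most `m`. -/
def IsLowShape (lam : NPartition (m + 1)) (mu : NPartition m) (T : ℕ → ℕ → ℕ) : Prop :=
  ∀ c i, InShape mu c i ↔ InShape lam c i ∧ T c i ≤ m

/-- The filling of shape `λ` that extends `S` by the entry `m + 1` outside the subshape `μ`. -/
def extendTab (lam : NPartition (m + 1)) (mu : NPartition m) (S : ℕ → ℕ → ℕ) (c i : ℕ) : ℕ :=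
  if InShape mu c i then S c i else if InShape lam c i then m + 1 else 0

/-- The restriction of a filling to the shape `μ`. -/
def restrictTab (mu : NPartition m) (T : ℕ → ℕ → ℕ) (c i : ℕ) : ℕ :=
  if InShape mu c i then T c i else 0

theorem isLowShape_extendTab (h : Interlaces lam mu) (hS : IsTableau mu S) :
    IsLowShape lam mu (extendTab lam mu S) := by
  intro c i
  by_cases hmu : InShape mu c i
  · simp only [extendTab, hmu, h.inShape hmu, if_true, true_and, (hS.1.1 c i hmu).2]
  · by_cases hlam : InShape lam c i <;> simp [extendTab, hmu, hlam]

theorem isTableau_extendTab (h : Interlaces lam mu) (hS : IsTableau mu S) :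
    IsTableau lam (extendTab lam mu S) := by
  have hmu {c i} (hci : InShape mu c i) : extendTab lam mu S c i = S c i := if_pos hci
  have hlam {c i} (hci : InShape lam c i) (hci' : ¬ InShape mu c i) :
      extendTab lam mu S c i = m + 1 := by rw [extendTab, if_neg hci', if_pos hci]
  have hent {c i} (hci : InShape lam c i) :
      1 ≤ extendTab lam mu S c i ∧ extendTab lam mu S c i ≤ m + 1 := by
    by_cases hci' : InShape mu c i
    · rw [hmu hci']
      exact (hS.1.1 c i hci').imp_right fun h => h.trans m.le_succ
    · rw [hlam hci hci']
      exact ⟨Nat.succ_pos m, le_rfl⟩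
  refine .of_pos (fun c i hci => ?_) (fun c i hci => hent hci) (fun c i hc hci => ?_)
    fun c i hi hci => ?_
  · rw [extendTab, if_neg (mt h.inShape hci), if_neg hci]
  · by_cases hci' : InShape mu (c + 1) i
    · rw [hmu hci', hmu (hci'.left hc)]
      exact hS.1.2.1 c i hci'
    · rw [hlam hci hci']
      exact (hent (hci.left hc)).2
  · by_cases hci' : InShape mu c (i + 1)
    · rw [hmu hci', hmu (hci'.up hi)]
      exact hS.1.2.2 c i hci'
    · have him : i ≤ m := Nat.le_of_succ_le_succ hci.2.2.1
      have hup : InShape mu c i := ⟨hci.1, hi, him, hci.2.2.2.trans (h i hi him).1⟩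
      rw [hlam hci hci', hmu hup]
      exact Nat.lt_succ_of_le (hS.1.1 c i hup).2

theorem restrictTab_extendTab (hS : IsTableau mu S) :
    restrictTab mu (extendTab lam mu S) = S := by
  ext c i
  by_cases hmu : InShape mu c i
  · rw [restrictTab, if_pos hmu, extendTab, if_pos hmu]
  · rw [restrictTab, if_neg hmu, hS.2 c i hmu]

theorem isTableau_restrictTab (hT : IsTableau lam T) (h : IsLowShape lam mu T) :
    IsTableau mu (restrictTab mu T) := by
  have hmu {c i} (hci : InShape mu c i) : restrictTab mu T c i = T c i := if_pos hci
  refine .of_pos (fun c i hci => if_neg hci) (fun c i hci => ?_) (fun c i hc hci => ?_)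
    fun c i hi hci => ?_
  · rw [hmu hci]
    exact ⟨(hT.1.1 c i ((h c i).1 hci).1).1, ((h c i).1 hci).2⟩
  · rw [hmu hci, hmu (hci.left hc)]
    exact hT.1.2.1 c i ((h _ i).1 hci).1
  · rw [hmu hci, hmu (hci.up hi)]
    exact hT.1.2.2 c i ((h c _).1 hci).1

theorem extendTab_restrictTab (hT : IsTableau lam T) (h : IsLowShape lam mu T) :
    extendTab lam mu (restrictTab mu T) = T := by
  ext c i
  by_cases hlam : InShape lam c i
  · by_cases hmu : InShape mu c i
    · rw [extendTab, if_pos hmu, restrictTab, if_pos hmu]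
    · have hm : ¬ T c i ≤ m := fun hm => hmu ((h c i).2 ⟨hlam, hm⟩)
      rw [extendTab, if_neg hmu, if_pos hlam]
      exact le_antisymm (not_le.1 hm) (hT.1.1 c i hlam).2
  · rw [extendTab, if_neg fun hmu => hlam ((h c i).1 hmu).1, if_neg hlam, hT.2 c i hlam]

/-- The number of entries at most `m` in each of the first `m` rows of `T`. -/
def lowRows (lam : NPartition (m + 1)) (T : ℕ → ℕ → ℕ) (j : Fin m) : ℕ :=
  ((Finset.Icc 1 (lam.part (j + 1))).filter fun c => T c (j + 1) ≤ m).card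

theorem le_lowRows_iff (hT : IsTableau lam T) (hc : 1 ≤ c) (j : Fin m) :
    c ≤ lowRows lam T j ↔ c ≤ lam.part (j + 1) ∧ T c (j + 1) ≤ m :=
  le_card_filter_Icc_iff (fun _ _ ha hab hb h => (hT.le_of_le ha hab
    ⟨ha.trans hab, Nat.succ_pos j, Nat.succ_le_succ j.is_lt.le, hb⟩).trans h) hc

theorem lowRows_mem_interlacing (hT : IsTableau lam T) :
    lowRows lam T ∈ interlacing (rows lam) := by
  refine Fintype.mem_piFinset.2 fun j => Finset.mem_Icc.2 ⟨?_, ?_⟩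
  · rcases Nat.eq_zero_or_pos (rows lam j.succ) with h0 | h0
    · exact h0.trans_le (Nat.zero_le _)
    · have hin : InShape lam (rows lam j.succ) (j + 1 + 1) :=
        ⟨h0, Nat.succ_pos _, Nat.succ_le_succ j.is_lt, le_rfl⟩
      exact (le_lowRows_iff hT h0 j).2 ⟨(hin.up (Nat.succ_pos j)).2.2.2,
        Nat.lt_succ_iff.1 ((hT.1.2.2 _ _ hin).trans_le (hT.1.1 _ _ hin).2)⟩
  · exact (Finset.card_filter_le _ _).trans_eq (by rw [Nat.card_Icc, Nat.add_sub_cancel]; rfl)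

theorem lowRows_eq_iff (hT : IsTableau lam T) {f : Fin m → ℕ} (hf : Antitone f) :
    lowRows lam T = f ↔ IsLowShape lam (.ofRows f) T := by
  have hpart (j : Fin m) : (NPartition.ofRows f).part (j + 1) = f j := congrFun (rows_ofRows hf) j
  constructor
  · rintro rfl c i
    constructor
    · rintro ⟨hc, hi, him, hci⟩
      obtain ⟨j, rfl⟩ : ∃ j : Fin m, i = j + 1 := ⟨⟨i - 1, by omega⟩, (Nat.sub_add_cancel hi).symm⟩
      rw [hpart, le_lowRows_iff hT hc] at hci
      exact ⟨⟨hc, hi, him.trans m.le_succ, hci.1⟩, hci.2⟩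
    · rintro ⟨hci, hle⟩
      obtain ⟨hc, hi, -, hlam⟩ := id hci
      have him := (hT.row_le hci).trans hle
      obtain ⟨j, rfl⟩ : ∃ j : Fin m, i = j + 1 := ⟨⟨i - 1, by omega⟩, (Nat.sub_add_cancel hi).symm⟩
      refine ⟨hc, hi, him, ?_⟩
      rw [hpart, le_lowRows_iff hT hc]
      exact ⟨hlam, hle⟩
  · intro h
    have hle {c} (hc : 1 ≤ c) (j : Fin m) : c ≤ lowRows lam T j ↔ c ≤ f j := by
      have hshape := h c (j + 1)
      simp only [InShape, hpart, hc, true_and] at hshape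
      rw [le_lowRows_iff hT hc]
      have := j.is_lt
      omega
    ext j
    have := hle (c := lowRows lam T j)
    have := hle (c := f j)
    grind

theorem prod_extendTab_row (h : Interlaces lam mu) (S : ℕ → ℕ → ℕ)
    (hi : i ∈ Finset.Icc 1 (m + 1)) :
    ∏ c ∈ Finset.Icc 1 (lam.part i), (X (extendTab lam mu S c i) : Poly) =
      X (m + 1) ^ (lam.part i - mu.part i) * ∏ c ∈ Finset.Icc 1 (mu.part i), X (S c i) := by
  obtain ⟨hi, him⟩ := Finset.mem_Icc.1 hi
  have hle := h.part_le hi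
  rw [← Finset.prod_sdiff (Finset.Icc_subset_Icc_right hle)]
  congr 1
  · have hcard : (Finset.Icc 1 (lam.part i) \ Finset.Icc 1 (mu.part i)).card =
        lam.part i - mu.part i := by
      rw [Finset.card_sdiff_of_subset (Finset.Icc_subset_Icc_right hle), Nat.card_Icc, Nat.card_Icc,
        Nat.add_sub_cancel, Nat.add_sub_cancel]
    rw [← hcard]
    refine Finset.prod_eq_pow_card fun c hc => congrArg X ?_
    rw [Finset.mem_sdiff, Finset.mem_Icc, Finset.mem_Icc] at hc
    have hmu : ¬ InShape mu c i := fun hci => hc.2 ⟨hci.1, hci.2.2.2⟩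
    rw [extendTab, if_neg hmu, if_pos ⟨hc.1.1, hi, him, hc.1.2⟩]
  · refine Finset.prod_congr rfl fun c hc => congrArg X (if_pos ?_)
    obtain ⟨hc, hci⟩ := Finset.mem_Icc.1 hc
    exact ⟨hc, hi, le_of_le_part hc hci, hci⟩

theorem weight_extendTab (h : Interlaces lam mu) (S : ℕ → ℕ → ℕ) :
    weight lam (extendTab lam mu S) =
      (∏ i ∈ Finset.Icc 1 (m + 1), X (m + 1) ^ (lam.part i - mu.part i)) * weight mu S := by
  rw [weight_eq_prod_rows, Finset.prod_congr rfl fun i => prod_extendTab_row h S,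
    Finset.prod_mul_distrib, weight_eq_prod_rows mu,
    Finset.prod_Icc_succ_top (Nat.le_add_left 1 m) fun i => ∏ c ∈ Finset.Icc 1 (mu.part i), _,
    mu.outside (m + 1) m.lt_succ_self, Finset.Icc_eq_empty_of_lt Nat.zero_lt_one, Finset.prod_empty,
    mul_one]

theorem interlaces_ofRows {f : Fin m → ℕ} (hf : f ∈ interlacing (rows lam)) :
    Interlaces lam (.ofRows f) := by
  intro k hk hkm
  obtain ⟨j, rfl⟩ : ∃ j : Fin m, k = j + 1 := ⟨⟨k - 1, by omega⟩, (Nat.sub_add_cancel hk).symm⟩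
  have hpart : (NPartition.ofRows f).part (j + 1) = f j :=
    congrFun (rows_ofRows (antitone_of_mem_interlacing (antitone_rows lam) hf)) j
  rw [hpart]
  exact Finset.mem_Icc.1 (Fintype.mem_piFinset.1 hf j)

theorem sum_weight_lowRows_eq {f : Fin m → ℕ} (hf : f ∈ interlacing (rows lam)) :
    ∑ T ∈ tableaux lam with lowRows lam T = f, weight lam T =
      X (m + 1) ^ rows lam (Fin.last m) *
        ((∏ j : Fin m, X (m + 1) ^ (rows lam j.castSucc - f j)) * schur (.ofRows f)) := by
  have hanti := antitone_of_mem_interlacing (antitone_rows lam) hf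
  have hint := interlaces_ofRows hf
  have hprod : ∏ i ∈ Finset.Icc 1 (m + 1),
      (X (m + 1) : Poly) ^ (lam.part i - (NPartition.ofRows f).part i) =
      (∏ j : Fin m, X (m + 1) ^ (rows lam j.castSucc - f j)) *
        X (m + 1) ^ rows lam (Fin.last m) := by
    have hlast := (NPartition.ofRows f).outside (m + 1) m.lt_succ_self
    rw [prod_Icc_one_eq_prod_fin, Fin.prod_univ_castSucc, Fin.val_last, hlast, Nat.sub_zero]
    simp only [Fin.val_castSucc, rows, Fin.val_last, ← congrFun (rows_ofRows hanti)]
  rw [mul_left_comm, ← mul_assoc, ← hprod, schur, Finset.mul_sum]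
  have htab {T} : T ∈ (tableaux lam).filter (lowRows lam · = f) ↔
      IsTableau lam T ∧ IsLowShape lam (.ofRows f) T := by
    rw [Finset.mem_filter, mem_tableaux]
    exact and_congr_right fun hT => lowRows_eq_iff hT hanti
  refine Finset.sum_nbij' (restrictTab (.ofRows f)) (extendTab lam (.ofRows f)) ?_ ?_ ?_ ?_ ?_
  all_goals simp only [htab, mem_tableaux]
  · exact fun T hT => isTableau_restrictTab hT.1 hT.2
  · exact fun S hS => ⟨isTableau_extendTab hint hS, isLowShape_extendTab hint hS⟩
  · exact fun T hT => extendTab_restrictTab hT.1 hT.2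
  · exact fun S hS => restrictTab_extendTab hS
  · intro T hT
    rw [← weight_extendTab hint, extendTab_restrictTab hT.1 hT.2]

theorem schur_succ (lam : NPartition (m + 1)) :
    schur lam = X (m + 1) ^ rows lam (Fin.last m) * ∑ f ∈ interlacing (rows lam),
      (∏ j : Fin m, X (m + 1) ^ (rows lam j.castSucc - f j)) * schur (.ofRows f) := by
  rw [schur, Finset.mul_sum, ← Finset.sum_fiberwise_of_maps_to fun T hT =>
    lowRows_mem_interlacing (mem_tableaux.1 hT)]
  exact Finset.sum_congr rfl fun f hf => sum_weight_lowRows_eq hf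

theorem alternant_rows_eq_mul_schur (lam : NPartition n) :
    alternant (fun j : Fin n => (X (j + 1) : Poly)) (rows lam) =
      alternant (fun j : Fin n => (X (j + 1) : Poly)) 0 * schur lam := by
  induction n with
  | zero => simp [alternant, schur_of_isEmpty]
  | succ m ih =>
    have hsum : ∑ f ∈ interlacing (rows lam),
          (∏ j : Fin m, (X (m + 1) : Poly) ^ (rows lam j.castSucc - f j)) *
            alternant (fun j : Fin m => (X (j + 1) : Poly)) f =
        alternant (fun j : Fin m => (X (j + 1) : Poly)) 0 * ∑ f ∈ interlacing (rows lam),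
          (∏ j : Fin m, X (m + 1) ^ (rows lam j.castSucc - f j)) * schur (.ofRows f) := by
      rw [Finset.mul_sum]
      refine Finset.sum_congr rfl fun f hf => ?_
      have h := ih (.ofRows f)
      rw [rows_ofRows (antitone_of_mem_interlacing (antitone_rows lam) hf)] at h
      rw [h, mul_left_comm]
    rw [alternant_succ _ (antitone_rows lam), alternant_zero_succ, schur_succ]
    simp only [Fin.val_last, Fin.val_castSucc, hsum]
    ring

theorem sum_atomPoly_eq_schur (lam : NPartition n) :
    ∑ u ∈ permsOn n, atomPoly lam u = schur lam := by
  have hne : alternant (fun j : Fin n => (X (j + 1) : Poly)) 0 ≠ 0 :=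
    alternant_zero_ne_zero
      ((X_injective (R := ℚ)).comp (Nat.succ_injective.comp Fin.val_injective))
  refine mul_left_cancel₀ hne ?_
  rw [alternant_zero_mul_sum_atomPoly, alternant_rows_eq_mul_schur]

end Branching

/-! ### Permutations as functions -/

section Encoding

variable {n : ℕ} {p q : ℕ → ℕ} {w : List ℕ}

theorem exists_mem_permsOn_coe_eq_iff :
    (∃ u ∈ permsOn n, ⇑u = p) ↔ IsNPerm n p ∧ ∀ t, t = 0 ∨ n < t → p t = t := by
  have hout : ∀ t, t ∉ Set.Icc 1 n ↔ t = 0 ∨ n < t := fun t => by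
    rw [Set.mem_Icc]
    omega
  simp only [← hout]
  constructor
  · rintro ⟨u, hu, rfl⟩
    exact ⟨isNPerm_of_mem_permsOn hu, fun t ht => mem_permsOn.1 hu t (by simpa using ht)⟩
  · rintro ⟨hp, hfix⟩
    have hcompl : Set.BijOn p (Set.Icc 1 n)ᶜ (Set.Icc 1 n)ᶜ :=
      (Set.bijOn_id _).congr fun t ht => (hfix t ht).symm
    have hbij : Function.Bijective p := by
      rw [← Set.bijOn_univ, ← Set.union_compl_self (Set.Icc 1 n)]
      exact hp.union hcompl <| (Set.injOn_union disjoint_compl_right).2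
        ⟨hp.injOn, hcompl.injOn, fun a ha b hb hab => hcompl.mapsTo hb (hab ▸ hp.mapsTo ha)⟩
    exact ⟨Equiv.ofBijective p hbij,
      mem_permsOn.2 fun t ht => hfix t (by rwa [← Finset.coe_Icc]), rfl⟩

theorem finsum_atomPoly_inSnLam (lam : NPartition n) (B : (ℕ → ℕ) → Prop) :
    ∑ᶠ p ∈ {p | InSnLam lam p ∧ (∀ t, t = 0 ∨ n < t → p t = t) ∧ B p}, atomPoly lam p =
      ∑ u ∈ (permsOn n).filter fun u : Equiv.Perm ℕ => B u, atomPoly lam u := by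
  have himage : {p | InSnLam lam p ∧ (∀ t, t = 0 ∨ n < t → p t = t) ∧ B p} =
      DFunLike.coe '' ((((permsOn n).filter fun u : Equiv.Perm ℕ => B u).filter
        fun u : Equiv.Perm ℕ => InSnLam lam u : Finset (Equiv.Perm ℕ)) : Set (Equiv.Perm ℕ)) := by
    ext p
    simp only [Set.mem_ofPred_eq, Set.mem_image, Finset.mem_coe, Finset.mem_filter]
    constructor
    · rintro ⟨hlam, hfix, hB⟩
      obtain ⟨u, hu, rfl⟩ := exists_mem_permsOn_coe_eq_iff.2 ⟨hlam.1, hfix⟩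
      exact ⟨u, ⟨⟨hu, hB⟩, hlam⟩, rfl⟩
    · rintro ⟨u, ⟨⟨hu, hB⟩, hlam⟩, rfl⟩
      exact ⟨hlam, (exists_mem_permsOn_coe_eq_iff.1 ⟨u, hu, rfl⟩).2, hB⟩
  rw [himage, finsum_mem_image DFunLike.coe_injective.injOn, finsum_mem_coe_finset,
    sum_atomPoly_filter_inSnLam lam _ (Finset.filter_subset _ _)]

theorem keyTab_congr (lam : NPartition n) (h : Set.EqOn p q (Set.Icc 1 n)) :
    keyTab lam p = keyTab lam q := by
  ext j i
  have hzeta : zeta lam j ≤ n := (Finset.card_filter_le _ _).trans_eq (Nat.card_Icc 1 n)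
  have himage : (Finset.Icc 1 (zeta lam j)).image p = (Finset.Icc 1 (zeta lam j)).image q :=
    Finset.image_congr (by
      rw [Finset.coe_Icc]
      exact h.mono (Set.Icc_subset_Icc_right hzeta))
  rw [keyTab, keyTab, himage]

theorem eqOn_wordPerm (hw : IsReducedWord n w p) : Set.EqOn p (wordPerm w) (Set.Icc 1 n) :=
  fun t ht => by rw [← hw.1.2 t ht.1 ht.2, permOfWord_eq]

theorem isReduced_of_isReducedWord (hw : IsReducedWord n w p) : IsReduced n w := by
  have hfor : ∀ v, WordFor n v p ↔ WordFor n v (wordPerm w) := fun v =>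
    and_congr_right fun _ => forall₃_congr fun t h₁ h₂ => by rw [eqOn_wordPerm hw ⟨h₁, h₂⟩]
  have hred : IsReducedWord n w (wordPerm w) := by
    simpa only [IsReducedWord, hfor] using hw
  exact ((isReducedWord_iff (wordPerm_mem_permsOn hw.1.1)).1 hred).1

end Encoding

/-- `d_λ(π;x) = Σ c_λ(π';x)` over all `π' ∈ S_n^λ` with
`Y_λ(π') ≤ Y_λ(π)`; in particular `s_λ(x) = Σ_{π' ∈ S_n^λ} c_λ(π';x)`. -/
theorem demazure_eq_sum_atoms (n : ℕ) (hn : 1 ≤ n) (lam : NPartition n)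
    (p : ℕ → ℕ) (hp : IsNPerm n p) (w : List ℕ) (hw : IsReducedWord n w p) :
    (applyOps rhoOp w (lamMonomial lam) =
      ∑ᶠ p' ∈ {p' : ℕ → ℕ | InSnLam lam p' ∧ (∀ t, t = 0 ∨ n < t → p' t = t) ∧
          ∀ j i, InShape lam j i → keyTab lam p' j i ≤ keyTab lam p j i},
        atomPoly lam p') ∧
    ((∑ᶠ T ∈ {T : ℕ → ℕ → ℕ | IsSSYT lam T ∧ ZeroOutside lam T}, weight lam T) =
      ∑ᶠ p' ∈ {p' : ℕ → ℕ | InSnLam lam p' ∧ ∀ t, t = 0 ∨ n < t → p' t = t},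
        atomPoly lam p') := by
  constructor
  · have hred := isReduced_of_isReducedWord hw
    rw [applyOps_rhoOp_eq_sum_keyLE lam hred, keyTab_congr lam (eqOn_wordPerm hw),
      finsum_atomPoly_inSnLam lam
        fun p' => ∀ j i, InShape lam j i → keyTab lam p' j i ≤ keyTab lam (wordPerm w) j i]
    refine Finset.sum_congr (Finset.filter_congr fun u hu => ?_) fun _ _ => rfl
    exact (keyTab_le_iff_keyLE hu hred.wordPerm_mem).symm
  · have hatoms := finsum_atomPoly_inSnLam lam fun _ => True
    simp only [and_true, Finset.filter_true] at hatoms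
    rw [hatoms, sum_atomPoly_eq_schur]
    exact finsum_mem_eq_finite_toFinset_sum _ (finite_setOf_isTableau lam)

end KeyPoly
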